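/- If G is a simple graph with treewidth at most 6, then τ(G) ≤ 2·ν(G). -/

import Mathlib

open SimpleGraph

variable {V : Type*}

/-- A triangle transversal of `G`: a set of edges of `G` meeting every triangle of `G`
(so that its removal leaves a triangle-free graph). -/
def IsTriangleTransversal (G : SimpleGraph V) (X : Finset (Sym2 V)) : Prop :=
  ↑X ⊆ G.edgeSet ∧
    ∀ t : Finset V, G.IsNClique 3 t → ∃ e ∈ X, ∀ v ∈ e, v ∈ t

/-- A triangle packing of `G`: a set of pairwise edge-disjoint triangles of `G`. -/
def IsTrianglePacking (G : SimpleGraph V) (Y : Finset (Finset V)) : Prop :=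
  (∀ t ∈ Y, G.IsNClique 3 t) ∧
    ∀ s ∈ Y, ∀ t ∈ Y, s ≠ t →
      ∀ e ∈ G.edgeSet, ¬ ((∀ v ∈ e, v ∈ s) ∧ (∀ v ∈ e, v ∈ t))

/-- `tau G` is the minimum size of a triangle transversal of `G`. -/
noncomputable def tau (G : SimpleGraph V) : ℕ :=
  sInf {n | ∃ X : Finset (Sym2 V), IsTriangleTransversal G X ∧ X.card = n}

/-- `nu G` is the maximum size of a triangle packing of `G`. -/
noncomputable def nu (G : SimpleGraph V) : ℕ :=
  sSup {n | ∃ Y : Finset (Finset V), IsTrianglePacking G Y ∧ Y.card = n}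

/-- A tree decomposition of `G` with nodes indexed by `α`. -/
structure TreeDecomp (G : SimpleGraph V) (α : Type) where
  T : SimpleGraph α
  isTree : T.IsTree
  bag : α → Finset V
  covers : ∀ v : V, ∃ t : α, v ∈ bag t
  edge_mem : ∀ ⦃u w : V⦄, G.Adj u w → ∃ t : α, u ∈ bag t ∧ w ∈ bag t
  subtree : ∀ v : V, (T.induce {t : α | v ∈ bag t}).Connected

/-- `G` has a tree decomposition of width at most `k`. -/
def HasDecompOfWidthLE (G : SimpleGraph V) (k : ℕ) : Prop :=
  ∃ (α : Type) (D : TreeDecomp G α), ∀ t : α, (D.bag t).card ≤ k + 1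

/-- The treewidth of `G`. -/
noncomputable def treewidth (G : SimpleGraph V) : ℕ :=
  sInf {k | HasDecompOfWidthLE G k}

/-!
In an edge-minimal counterexample no reduction is possible: there is no nonempty family `T` of
edge-disjoint triangles, together with a set `S` of at most `2 |T|` edges and a set `F` of edges,
such that `S ∪ F` contains all sides of triangles in `T` and `S` meets every triangle with a side
in `F`. When `F` consists of the edges at one, two or three vertices with few neighbours, whether
there is a reduction depends only on the adjacencies among these neighbours, and all possibilities
can be enumerated. It follows that a vertex of degree at most `6` has degree `5` or `6` unless it is
isolated, and that the neighbourhoods of two such vertices have a large union.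

In a tree decomposition with bags of size at most `7`, the leaves (simplicial vertices) have
degree at most `6`, and no two of them share a bag. Let `w` become a leaf after all leaves are
removed. Then `w` is adjacent to one leaf, hence to two, hence to three. Any two of these have
degree `5` and three common neighbours, and further reductions show that the neighbourhoods of
three such leaves do not fit into one bag.
-/

namespace Tuza

/-! ### Reductions -/

/-- The inequality of Tuza's conjecture for `G`: some triangle transversal is at most twice as
large as some triangle packing. -/
def HasBound (G : SimpleGraph V) : Prop :=
  ∃ X Y, IsTriangleTransversal G X ∧ IsTrianglePacking G Y ∧ X.card ≤ 2 * Y.card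

/-- An edge-minimal graph violating `HasBound`. -/
structure IsMinCounterexample (G : SimpleGraph V) : Prop where
  not_hasBound : ¬ HasBound G
  hasBound_of_lt : ∀ H < G, HasBound H

/-- A reduction of `G`: the packing `T` accounts for the deletion of the edges in `S ∪ F`, where
`S` already meets all triangles through edges of `F`. -/
structure IsReduction (G : SimpleGraph V) (F : Set (Sym2 V)) (T : Finset (Finset V))
    (S : Finset (Sym2 V)) : Prop where
  packing : IsTrianglePacking G T
  card_le : S.card ≤ 2 * T.card
  mem_or_mem : ∀ t ∈ T, ∀ e ∈ G.edgeSet, e ∈ t.sym2 → e ∈ S ∨ e ∈ F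
  exists_mem : ∀ t, G.IsNClique 3 t → ∀ e ∈ F, e ∈ G.edgeSet → e ∈ t.sym2 →
    ∃ e' ∈ S, e' ∈ G.edgeSet ∧ e' ∈ t.sym2

section Reduction

variable {G : SimpleGraph V}

theorem mem_edgeSet_of_mem_sym2 {t : Finset V} (ht : G.IsClique t) {e : Sym2 V} (he : e ∈ t.sym2)
    (hdiag : ¬ e.IsDiag) : e ∈ G.edgeSet := by
  induction e with | _ u v
  rw [Finset.mk_mem_sym2_iff] at he
  exact ht he.1 he.2 hdiag

theorem isNClique_deleteEdges {n : ℕ} {t : Finset V} (ht : G.IsNClique n t) {D : Set (Sym2 V)}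
    (hD : ∀ e ∈ D, e ∈ G.edgeSet → e ∉ t.sym2) : (G.deleteEdges D).IsNClique n t := by
  refine ⟨fun u hu v hv huv => ?_, ht.card_eq⟩
  have hadj := ht.isClique hu hv huv
  exact deleteEdges_adj.2 ⟨hadj, fun hmem => hD _ hmem hadj (Finset.mk_mem_sym2_iff.2 ⟨hu, hv⟩)⟩

theorem exists_edge_mem_sym2 {t : Finset V} (ht : G.IsNClique 3 t) :
    ∃ e ∈ G.edgeSet, e ∈ t.sym2 := by
  classical
  obtain ⟨a, b, c, hab, -, -, rfl⟩ := is3Clique_iff.1 ht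
  exact ⟨s(a, b), hab, by simp⟩

theorem exists_adj_adj_of_mem_sym2 {t : Finset V} (ht : G.IsNClique 3 t) {u v : V} (huv : u ≠ v)
    (hmem : s(u, v) ∈ t.sym2) : ∃ w ∈ t, G.Adj u w ∧ G.Adj v w := by
  classical
  obtain ⟨hu, hv⟩ := Finset.mk_mem_sym2_iff.1 hmem
  obtain ⟨w, hw, hwuv⟩ := Finset.exists_mem_notMem_of_card_lt_card
    (show ({u, v} : Finset V).card < t.card by rw [Finset.card_pair huv, ht.card_eq]; decide)
  rw [Finset.mem_insert, Finset.mem_singleton, not_or] at hwuv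
  exact ⟨w, hw, ht.isClique hu hw (Ne.symm hwuv.1), ht.isClique hv hw (Ne.symm hwuv.2)⟩

namespace IsReduction

variable {F : Set (Sym2 V)} {T : Finset (Finset V)} {S : Finset (Sym2 V)}

theorem exists_transversal (h : IsReduction G F T S) {X : Finset (Sym2 V)}
    (hX : IsTriangleTransversal (G.deleteEdges (S ∪ F)) X) :
    ∃ X', IsTriangleTransversal G X' ∧ X'.card ≤ S.card + X.card := by
  classical
  refine ⟨S.filter (· ∈ G.edgeSet) ∪ X, ⟨?_, fun t ht => ?_⟩,
    (Finset.card_union_le _ _).trans (by gcongr; exact Finset.filter_subset _ _)⟩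
  · rw [Finset.coe_union, Set.union_subset_iff]
    exact ⟨fun e he => (Finset.mem_filter.1 he).2,
      hX.1.trans (edgeSet_mono (G.deleteEdges_le _))⟩
  · simp only [← Finset.mem_sym2_iff, Finset.mem_union, Finset.mem_filter]
    by_cases hD : ∀ e ∈ (↑S ∪ F : Set (Sym2 V)), e ∈ G.edgeSet → e ∉ t.sym2
    · obtain ⟨e, he, het⟩ := hX.2 t (isNClique_deleteEdges ht hD)
      exact ⟨e, Or.inr he, Finset.mem_sym2_iff.2 het⟩
    · push Not at hD
      obtain ⟨e, heS | heF, he, het⟩ := hD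
      · exact ⟨e, Or.inl ⟨heS, he⟩, het⟩
      · obtain ⟨e', he'S, he', he't⟩ := h.exists_mem t ht e heF he het
        exact ⟨e', Or.inl ⟨he'S, he'⟩, he't⟩

theorem notMem_sym2_of_mem_packing (h : IsReduction G F T S) {Y : Finset (Finset V)}
    (hY : IsTrianglePacking (G.deleteEdges (S ∪ F)) Y) {s t : Finset V} (hs : s ∈ T) (ht : t ∈ Y)
    {e : Sym2 V} (he : e ∈ G.edgeSet) (hes : e ∈ s.sym2) : e ∉ t.sym2 := by
  intro het
  have := mem_edgeSet_of_mem_sym2 (hY.1 t ht).isClique het (G.not_isDiag_of_mem_edgeSet he)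
  rw [edgeSet_deleteEdges] at this
  exact this.2 (h.mem_or_mem s hs e he hes)

theorem exists_packing (h : IsReduction G F T S) {Y : Finset (Finset V)}
    (hY : IsTrianglePacking (G.deleteEdges (S ∪ F)) Y) :
    ∃ Y', IsTrianglePacking G Y' ∧ Y'.card = T.card + Y.card := by
  classical
  have hdisj : Disjoint T Y := Finset.disjoint_left.2 fun t ht ht' => by
    obtain ⟨e, he, het⟩ := exists_edge_mem_sym2 (h.packing.1 t ht)
    exact h.notMem_sym2_of_mem_packing hY ht ht' he het het
  refine ⟨T ∪ Y, ⟨fun t ht => ?_, ?_⟩, Finset.card_union_of_disjoint hdisj⟩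
  · rcases Finset.mem_union.1 ht with ht | ht
    · exact h.packing.1 t ht
    · exact (hY.1 t ht).mono (G.deleteEdges_le _)
  · simp only [← Finset.mem_sym2_iff]
    rintro s hs t ht hst e he ⟨hes, het⟩
    rcases Finset.mem_union.1 hs with hs | hs <;> rcases Finset.mem_union.1 ht with ht | ht
    · exact h.packing.2 s hs t ht hst e he
        ⟨Finset.mem_sym2_iff.1 hes, Finset.mem_sym2_iff.1 het⟩
    · exact h.notMem_sym2_of_mem_packing hY hs ht he hes het
    · exact h.notMem_sym2_of_mem_packing hY ht hs he het hes
    · exact hY.2 s hs t ht hst e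
        (mem_edgeSet_of_mem_sym2 (hY.1 s hs).isClique hes (G.not_isDiag_of_mem_edgeSet he))
        ⟨Finset.mem_sym2_iff.1 hes, Finset.mem_sym2_iff.1 het⟩

theorem hasBound (h : IsReduction G F T S) (hD : HasBound (G.deleteEdges (S ∪ F))) :
    HasBound G := by
  obtain ⟨X, Y, hX, hY, hXY⟩ := hD
  obtain ⟨X', hX', hXcard⟩ := h.exists_transversal hX
  obtain ⟨Y', hY', hYcard⟩ := h.exists_packing hY
  have := h.card_le
  exact ⟨X', Y', hX', hY', by omega⟩

end IsReduction

namespace IsMinCounterexample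

theorem disjoint_edgeSet (hG : IsMinCounterexample G) {F : Set (Sym2 V)} {T : Finset (Finset V)}
    {S : Finset (Sym2 V)} (h : IsReduction G F T S) : Disjoint G.edgeSet (S ∪ F) := by
  rw [← deleteEdges_eq_self]
  by_contra hne
  exact hG.not_hasBound (h.hasBound (hG.hasBound_of_lt _ ((G.deleteEdges_le _).lt_of_ne hne)))

theorem eq_empty_of_isReduction (hG : IsMinCounterexample G) {F : Set (Sym2 V)}
    {T : Finset (Finset V)} {S : Finset (Sym2 V)} (h : IsReduction G F T S) : T = ∅ := by
  refine Finset.eq_empty_of_forall_notMem fun t ht => ?_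
  obtain ⟨e, he, het⟩ := exists_edge_mem_sym2 (h.packing.1 t ht)
  exact Set.disjoint_left.1 (hG.disjoint_edgeSet h) he (h.mem_or_mem t ht e he het)

theorem exists_common_neighbor (hG : IsMinCounterexample G) {u v : V} (huv : G.Adj u v) :
    ∃ w, G.Adj u w ∧ G.Adj v w := by
  by_contra! hno
  have hred : IsReduction G {s(u, v)} ∅ ∅ := by
    refine ⟨⟨by simp, by simp⟩, by simp, by simp, ?_⟩
    rintro t ht e rfl - he
    obtain ⟨w, -, huw, hvw⟩ := exists_adj_adj_of_mem_sym2 ht huv.ne he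
    exact absurd hvw (hno w huw)
  exact Set.disjoint_left.1 (hG.disjoint_edgeSet hred) (show s(u, v) ∈ G.edgeSet from huv) (by simp)

end IsMinCounterexample

end Reduction

/-! ### Obstructions -/

section Search

/-- Finite sets of natural numbers are encoded by the binary digits of a number. This is
disjointness of two sets so encoded. -/
def masksDisjoint (a b : ℕ) : Bool := (a &&& b).beq 0

/-- A condition on a predicate `φ : ℕ → Prop`, saying that `φ` holds on the mask `present` and
fails somewhere on each mask in `broken`. -/
structure Obstruction where
  present : ℕ
  broken : List ℕ

theorem masksDisjoint_iff {a b : ℕ} :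
    masksDisjoint a b = true ↔ ∀ k, a.testBit k = true → b.testBit k = false := by
  rw [masksDisjoint, Nat.beq_eq]
  refine ⟨fun h k ha => ?_, fun h => Nat.zero_of_testBit_eq_false fun k => ?_⟩
  · have := congrArg (Nat.testBit · k) h
    simpa [ha] using this
  · cases ha : a.testBit k <;> simp [ha, h]

/-- The least element of the set encoded by `m`. -/
def lowestBit (m : ℕ) : ℕ := (m ^^^ (m - 1)).log2

namespace Obstruction

/-- `φ` satisfies the condition `o`. -/
def Holds (o : Obstruction) (φ : ℕ → Prop) : Prop :=
  (∀ k, o.present.testBit k → φ k) ∧ ∀ m ∈ o.broken, ∃ k, m.testBit k ∧ ¬ φ k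

/-- What remains of an obstruction for predicates that hold on `P`, if anything. -/
def assumeTrue (P : ℕ) (o : Obstruction) : Option Obstruction :=
  let broken := o.broken.map fun m => m ^^^ (m &&& P)
  bif broken.elem 0 then none else some ⟨o.present ^^^ (o.present &&& P), broken⟩

/-- What remains of an obstruction for predicates that fail on all of `N`, if anything. -/
def assumeFalse (N : ℕ) (o : Obstruction) : Option Obstruction :=
  bif masksDisjoint N o.present then some ⟨o.present, o.broken.filter (masksDisjoint N)⟩ else none

/-- The number of masks on which the validity of the obstruction still depends. -/
def cost (o : Obstruction) : ℕ :=
  bif o.present.beq 0 then o.broken.length else o.broken.length + 1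

/-- A mask on which the validity of the obstruction still depends. -/
def undetermined (o : Obstruction) : Option ℕ :=
  bif o.present.beq 0 then o.broken.head? else some o.present

/-- An obstruction of least cost. Ignoring costs of `10` and more can only make the search fail. -/
def cheapest (L : List Obstruction) : Option Obstruction :=
  (List.range 10).findSome? fun c => L.find? fun o => o.cost.beq c

/-- Case analysis on single values of a predicate, at most `fuel` deep, checking that each predicate
satisfies one of the listed obstructions. It branches on the obstruction closest to being met. -/
def search : ℕ → List Obstruction → Bool
  | 0, _ => false
  | fuel + 1, L =>
    match cheapest L with
    | none => false
    | some o =>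
      match o.undetermined with
      | none => true
      | some m =>
        search fuel (L.filterMap (assumeTrue (2 ^ lowestBit m))) &&
          search fuel (L.filterMap (assumeFalse (2 ^ lowestBit m)))

variable {o o' : Obstruction} {φ : ℕ → Prop}

theorem Holds.of_assumeTrue {P : ℕ} (hP : ∀ k, P.testBit k → φ k)
    (h : o.assumeTrue P = some o') (ho' : o'.Holds φ) : o.Holds φ := by
  simp only [assumeTrue, cond_eq_ite] at h
  obtain ⟨-, rfl⟩ := Option.ite_none_left_eq_some.1 h |>.imp_right Option.some.inj
  refine ⟨fun k hk => ?_, fun m hm => ?_⟩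
  · by_cases hPk : P.testBit k
    · exact hP k hPk
    · exact ho'.1 k (by simp [hk, hPk])
  · obtain ⟨k, hk, hφ⟩ := ho'.2 _ (List.mem_map_of_mem hm)
    refine ⟨k, ?_, hφ⟩
    by_contra hmk
    simp [hmk] at hk

theorem Holds.of_assumeFalse {N : ℕ} (hN : ∀ k, N.testBit k → ¬ φ k)
    (h : o.assumeFalse N = some o') (ho' : o'.Holds φ) : o.Holds φ := by
  simp only [assumeFalse, cond_eq_ite] at h
  obtain ⟨-, rfl⟩ := Option.ite_none_right_eq_some.1 h |>.imp_right Option.some.inj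
  refine ⟨ho'.1, fun m hm => ?_⟩
  by_cases hd : masksDisjoint N m
  · exact ho'.2 m (List.mem_filter.2 ⟨hm, hd⟩)
  · rw [masksDisjoint_iff] at hd
    push Not at hd
    obtain ⟨k, hNk, hmk⟩ := hd
    exact ⟨k, by simpa using hmk, hN k hNk⟩

theorem holds_of_undetermined_eq_none (h : o.undetermined = none) : o.Holds φ := by
  rw [undetermined, cond_eq_ite] at h
  split_ifs at h with hp
  rw [List.head?_eq_none_iff] at h
  rw [Nat.beq_eq] at hp
  exact ⟨by simp [hp], by simp [h]⟩

theorem exists_holds_of_filterMap {L : List Obstruction} {g : Obstruction → Option Obstruction}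
    (hg : ∀ o o', g o = some o' → o'.Holds φ → o.Holds φ) (h : ∃ o ∈ L.filterMap g, o.Holds φ) :
    ∃ o ∈ L, o.Holds φ := by
  obtain ⟨o', ho', hφ⟩ := h
  obtain ⟨o, ho, hgo⟩ := List.mem_filterMap.1 ho'
  exact ⟨o, ho, hg o o' hgo hφ⟩

theorem mem_of_cheapest_eq_some {L : List Obstruction} (h : cheapest L = some o) : o ∈ L := by
  obtain ⟨_, -, hc⟩ := List.exists_of_findSome?_eq_some h
  exact List.mem_of_find?_eq_some hc

theorem exists_holds_of_search (φ : ℕ → Prop) {fuel : ℕ} {L : List Obstruction}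
    (h : search fuel L = true) : ∃ o ∈ L, o.Holds φ := by
  induction fuel generalizing L with
  | zero => simp [search] at h
  | succ fuel ih =>
    rw [search] at h
    split at h
    · simp at h
    · rename_i o ho
      split at h
      · rename_i hnone
        exact ⟨o, mem_of_cheapest_eq_some ho, holds_of_undetermined_eq_none hnone⟩
      · rename_i m _
        rw [Bool.and_eq_true] at h
        by_cases hm : φ (lowestBit m)
        · refine exists_holds_of_filterMap (fun _ _ => Holds.of_assumeTrue fun k hk => ?_) (ih h.1)
          obtain rfl : lowestBit m = k := by
            simpa only [Nat.testBit_two_pow, decide_eq_true_iff] using hk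
          exact hm
        · refine exists_holds_of_filterMap (fun _ _ => Holds.of_assumeFalse fun k hk => ?_) (ih h.2)
          obtain rfl : lowestBit m = k := by
            simpa only [Nat.testBit_two_pow, decide_eq_true_iff] using hk
          exact hm

end Obstruction

end Search

/-! ### Patterns -/

section Coding

/-- A number encoding the unordered pair of the labels `i` and `j`. -/
def edgeCode (i j : ℕ) : ℕ := Nat.pair (min i j) (max i j)

/-- The pair of vertices with code `k` when `f` labels vertices by numbers. -/
def edgeOf (f : ℕ → V) (k : ℕ) : Sym2 V := s(f k.unpair.1, f k.unpair.2)

/-- The set of codes of a list of pairs, as a bit mask. -/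
def mask (l : List (ℕ × ℕ)) : ℕ := l.foldr (fun e m => 2 ^ edgeCode e.1 e.2 ||| m) 0

/-- The label pairs contained in a triple. -/
def sides (t : ℕ × ℕ × ℕ) : List (ℕ × ℕ) := [(t.1, t.2.1), (t.1, t.2.2), (t.2.1, t.2.2)]

/-- The labels below `n` other than `i`. -/
def others (n i : ℕ) : List ℕ := (List.range n).filter (· != i)

/-- The masks of the triangles through `i` with vertices below `n`. -/
def trianglesAt (n i : ℕ) : List ℕ :=
  (others n i).flatMap fun j => (others j i).map fun k => mask (sides (i, j, k))

theorem edgeOf_edgeCode (f : ℕ → V) (i j : ℕ) : edgeOf f (edgeCode i j) = s(f i, f j) := by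
  rw [edgeOf, edgeCode, Nat.unpair_pair]
  obtain h | h := le_total i j
  · rw [min_eq_left h, max_eq_right h]
  · rw [min_eq_right h, max_eq_left h, Sym2.eq_swap]

theorem edgeCode_eq_of_injOn {f : ℕ → V} {s : Set ℕ} (hf : s.InjOn f) {i j i' j' : ℕ}
    (hi : i ∈ s) (hj : j ∈ s) (hi' : i' ∈ s) (hj' : j' ∈ s) (h : s(f i, f j) = s(f i', f j')) :
    edgeCode i j = edgeCode i' j' := by
  obtain ⟨h₁, h₂⟩ | ⟨h₁, h₂⟩ := Sym2.eq_iff.1 h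
  · rw [hf hi hi' h₁, hf hj hj' h₂]
  · rw [hf hi hj' h₁, hf hj hi' h₂, edgeCode, edgeCode, min_comm, max_comm]

theorem testBit_mask {l : List (ℕ × ℕ)} {k : ℕ} :
    (mask l).testBit k = true ↔ ∃ e ∈ l, edgeCode e.1 e.2 = k := by
  induction l with
  | nil => simp [mask]
  | cons e l ih =>
    rw [mask, List.foldr_cons, Nat.testBit_or, Nat.testBit_two_pow, Bool.or_eq_true,
      decide_eq_true_iff, ← mask, ih, List.exists_mem_cons_iff]

theorem mem_others {n i j : ℕ} : j ∈ others n i ↔ j < n ∧ j ≠ i := by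
  simp only [others, List.mem_filter, List.mem_range, bne_iff_ne]

variable {G : SimpleGraph V} {f : ℕ → V}

theorem edgeOf_of_testBit_mask {l : List (ℕ × ℕ)} {P : Sym2 V → Prop}
    (h : ∀ e ∈ l, P s(f e.1, f e.2)) {k : ℕ} (hk : (mask l).testBit k = true) : P (edgeOf f k) := by
  obtain ⟨e, he, rfl⟩ := testBit_mask.1 hk
  exact edgeOf_edgeCode f e.1 e.2 ▸ h e he

theorem of_edgeOf_of_testBit_mask {l : List (ℕ × ℕ)} {P : Sym2 V → Prop}
    (h : ∀ k, (mask l).testBit k = true → P (edgeOf f k)) : ∀ e ∈ l, P s(f e.1, f e.2) :=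
  fun e he => edgeOf_edgeCode f e.1 e.2 ▸ h _ (testBit_mask.2 ⟨e, he, rfl⟩)

theorem exists_mem_trianglesAt {n i : ℕ}
    (hi : ∀ v, G.Adj (f i) v → ∃ j < n, f j = v) {t : Finset V} (ht : G.IsNClique 3 t)
    (hit : f i ∈ t) : ∃ m ∈ trianglesAt n i, ∀ k, m.testBit k = true →
      edgeOf f k ∈ G.edgeSet ∧ edgeOf f k ∈ t.sym2 := by
  classical
  obtain ⟨x, y, hxy, herase⟩ := Finset.card_eq_two.1
    (show (t.erase (f i)).card = 2 by rw [Finset.card_erase_of_mem hit, ht.card_eq])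
  obtain ⟨hxi, hxt⟩ := Finset.mem_erase.1 (show x ∈ t.erase (f i) by simp [herase])
  obtain ⟨hyi, hyt⟩ := Finset.mem_erase.1 (show y ∈ t.erase (f i) by simp [herase])
  have hix := ht.isClique hit hxt hxi.symm
  have hiy := ht.isClique hit hyt hyi.symm
  have hxy' := ht.isClique hxt hyt hxy
  obtain ⟨j, hj, rfl⟩ := hi x hix
  obtain ⟨k, hk, rfl⟩ := hi y hiy
  have hji : j ≠ i := by rintro rfl; exact hxi rfl
  have hki : k ≠ i := by rintro rfl; exact hyi rfl
  have hjk : j ≠ k := by rintro rfl; exact hxy rfl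
  wlog hkj : k < j generalizing j k
  · exact this k hk hyi hyt hiy j hj hxi hxt hix hxy.symm (by rw [herase, Finset.pair_comm])
      hxy'.symm hki hji hjk.symm (by omega)
  refine ⟨mask (sides (i, j, k)), List.mem_flatMap.2 ⟨j, mem_others.2 ⟨hj, hji⟩,
    List.mem_map.2 ⟨k, mem_others.2 ⟨hkj, hki⟩, rfl⟩⟩, fun m hm => ?_⟩
  refine edgeOf_of_testBit_mask (P := fun e => e ∈ G.edgeSet ∧ e ∈ t.sym2) ?_ hm
  simp [sides, hit, hxt, hyt, hix, hiy, hxy']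

end Coding

section Pattern

/-- A reduction in terms of vertex labels: delete all edges at the vertices `deleted` and put the
triangles `packing` in the packing. The sides of these avoiding `deleted`, together with the pairs
`extra`, form the transversal. -/
structure Pattern where
  deleted : List ℕ
  packing : List (ℕ × ℕ × ℕ)
  extra : List (ℕ × ℕ)

variable [DecidableEq V] {G : SimpleGraph V} {f : ℕ → V}

/-- The triangle with labels `t`. -/
def triangle (f : ℕ → V) (t : ℕ × ℕ × ℕ) : Finset V :=
  {f t.1, f t.2.1, f t.2.2}

theorem exists_mem_sides {t : ℕ × ℕ × ℕ} {e : Sym2 V} (he : e ∈ (triangle f t).sym2)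
    (hdiag : ¬ e.IsDiag) : ∃ p ∈ sides t, e = s(f p.1, f p.2) := by
  classical
  induction e with | _ u v
  rw [Finset.mk_mem_sym2_iff] at he
  simp only [triangle, Finset.mem_insert, Finset.mem_singleton] at he
  rw [Sym2.mk_isDiag_iff] at hdiag
  simp only [sides, List.mem_cons, List.not_mem_nil, or_false, exists_eq_or_imp, exists_eq_left]
  obtain ⟨rfl | rfl | rfl, rfl | rfl | rfl⟩ := he <;> simp_all [Sym2.eq_swap]

theorem isNClique_triangle {t : ℕ × ℕ × ℕ}
    (h : ∀ p ∈ sides t, s(f p.1, f p.2) ∈ G.edgeSet) : G.IsNClique 3 (triangle f t) := by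
  classical
  simp only [sides, List.forall_mem_cons, mem_edgeSet, List.not_mem_nil, false_imp_iff,
    implies_true, and_true] at h
  rw [triangle]
  convert is3Clique_triple_iff.2 h

namespace Pattern

/-- The label pairs forming the transversal of the reduction. -/
def transversal (p : Pattern) : List (ℕ × ℕ) :=
  p.extra ++ (p.packing.flatMap sides).filter fun e =>
    !(p.deleted.elem e.1 || p.deleted.elem e.2)

/-- The side conditions under which `p` reduces graphs that do not violate `p.obstruction`, if the
vertices in `closed` have labelled neighbours only and the labels below `n` are distinct. -/
def IsValid (n : ℕ) (closed : List ℕ) (p : Pattern) : Prop :=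
  (∀ i ∈ p.deleted, i ∈ closed) ∧ p.packing ≠ [] ∧
    (∀ t ∈ p.packing, ∀ e ∈ sides t, e.1 < n ∧ e.2 < n) ∧
    p.packing.Pairwise (fun s t => masksDisjoint (mask (sides s)) (mask (sides t)) = true) ∧
    p.transversal.length ≤ 2 * p.packing.length

instance (n : ℕ) (closed : List ℕ) (p : Pattern) : Decidable (p.IsValid n closed) :=
  inferInstanceAs (Decidable (_ ∧ _))

/-- The condition under which a valid pattern reduces a graph. -/
def obstruction (n : ℕ) (closed : List ℕ) (p : Pattern) : Obstruction :=
  ⟨mask (p.packing.flatMap sides), ((closed.filter p.deleted.elem).flatMap (trianglesAt n)).filter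
    (masksDisjoint (mask p.transversal))⟩

variable {n : ℕ} {closed : List ℕ} {p : Pattern}

/-- The pairs containing a vertex with a label in `p.deleted`. -/
def edgesAtDeleted (p : Pattern) (f : ℕ → V) : Set (Sym2 V) := {e | ∃ i ∈ p.deleted, f i ∈ e}

/-- The packing of the reduction, for vertices labelled by `f`. -/
def packingFinset (p : Pattern) (f : ℕ → V) : Finset (Finset V) :=
  (p.packing.map (triangle f)).toFinset

/-- The transversal of the reduction, for vertices labelled by `f`. -/
def transversalFinset (p : Pattern) (f : ℕ → V) : Finset (Sym2 V) :=
  (p.transversal.map fun e => s(f e.1, f e.2)).toFinset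

theorem pairwise_triangle (hf : (Set.Iio n).InjOn f) (hp : p.IsValid n closed) :
    p.packing.Pairwise fun s t =>
      ∀ e ∈ G.edgeSet, e ∈ (triangle f s).sym2 → e ∉ (triangle f t).sym2 := by
  obtain ⟨-, -, hlt, hdisj, -⟩ := hp
  refine hdisj.imp_of_mem fun {s t} hs ht hst e he hes het => ?_
  have hdiag := G.not_isDiag_of_mem_edgeSet he
  obtain ⟨a, ha, rfl⟩ := exists_mem_sides hes hdiag
  obtain ⟨b, hb, hab⟩ := exists_mem_sides het hdiag
  have hcode := edgeCode_eq_of_injOn hf (hlt s hs a ha).1 (hlt s hs a ha).2 (hlt t ht b hb).1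
    (hlt t ht b hb).2 hab
  have hbit := masksDisjoint_iff.1 hst _ (testBit_mask.2 ⟨a, ha, rfl⟩)
  rw [testBit_mask.2 ⟨b, hb, hcode.symm⟩] at hbit
  contradiction

theorem isNClique_of_holds (hφ : (p.obstruction n closed).Holds fun k => edgeOf f k ∈ G.edgeSet)
    {t : ℕ × ℕ × ℕ} (ht : t ∈ p.packing) : G.IsNClique 3 (triangle f t) :=
  isNClique_triangle fun a ha => of_edgeOf_of_testBit_mask (P := (· ∈ G.edgeSet)) hφ.1 a
    (List.mem_flatMap.2 ⟨t, ht, ha⟩)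

theorem isTrianglePacking (hf : (Set.Iio n).InjOn f) (hp : p.IsValid n closed)
    (hφ : (p.obstruction n closed).Holds fun k => edgeOf f k ∈ G.edgeSet) :
    IsTrianglePacking G (p.packingFinset f) := by
  simp only [IsTrianglePacking, packingFinset, List.mem_toFinset, List.forall_mem_map,
    ← Finset.mem_sym2_iff, not_and]
  refine ⟨fun t => isNClique_of_holds hφ, fun s hs t ht hst => ?_⟩
  have : Std.Symm fun s t =>
      ∀ e ∈ G.edgeSet, e ∈ (triangle f s).sym2 → e ∉ (triangle f t).sym2 :=
    ⟨fun _ _ h e he ht hs => h e he hs ht⟩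
  exact (pairwise_triangle hf hp).forall hs ht (ne_of_apply_ne _ hst)

theorem card_packingFinset (hf : (Set.Iio n).InjOn f) (hp : p.IsValid n closed)
    (hφ : (p.obstruction n closed).Holds fun k => edgeOf f k ∈ G.edgeSet) :
    (p.packingFinset f).card = p.packing.length := by
  have hnodup : (p.packing.map (triangle f)).Nodup := by
    refine List.pairwise_map.2 ((pairwise_triangle (G := G) hf hp).imp_of_mem ?_)
    intro s t hs _ hst heq
    obtain ⟨e, he, hes⟩ := exists_edge_mem_sym2 (isNClique_of_holds hφ hs)
    exact hst e he hes (heq ▸ hes)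
  rw [packingFinset, List.toFinset_card_of_nodup hnodup, List.length_map]

theorem card_transversalFinset_le : (p.transversalFinset f).card ≤ p.transversal.length :=
  (List.toFinset_card_le _).trans_eq (List.length_map _)

theorem mem_transversalFinset_or {t : ℕ × ℕ × ℕ} (ht : t ∈ p.packing) {e : Sym2 V}
    (het : e ∈ (triangle f t).sym2) (hdiag : ¬ e.IsDiag) :
    e ∈ p.transversalFinset f ∨ e ∈ p.edgesAtDeleted f := by
  obtain ⟨a, ha, rfl⟩ := exists_mem_sides het hdiag
  by_cases h : a.1 ∈ p.deleted ∨ a.2 ∈ p.deleted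
  · exact Or.inr (h.elim (fun h => ⟨_, h, Sym2.mem_mk_left _ _⟩)
      fun h => ⟨_, h, Sym2.mem_mk_right _ _⟩)
  · refine Or.inl (List.mem_toFinset.2 (List.mem_map.2 ⟨a, List.mem_append_right _ ?_, rfl⟩))
    exact List.mem_filter.2 ⟨List.mem_flatMap.2 ⟨t, ht, ha⟩, by simpa using h⟩

theorem exists_mem_transversalFinset
    (hclosed : ∀ i ∈ closed, ∀ v, G.Adj (f i) v → ∃ j < n, f j = v)
    (hp : p.IsValid n closed)
    (hφ : (p.obstruction n closed).Holds fun k => edgeOf f k ∈ G.edgeSet)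
    {t : Finset V} (ht : G.IsNClique 3 t) {i : ℕ} (hi : i ∈ p.deleted) (hit : f i ∈ t) :
    ∃ e ∈ p.transversalFinset f, e ∈ G.edgeSet ∧ e ∈ t.sym2 := by
  have hic := hp.1 i hi
  obtain ⟨m, hm, hmt⟩ := exists_mem_trianglesAt (hclosed i hic) ht hit
  have hmeet : ¬ masksDisjoint (mask p.transversal) m = true := fun hdisj => by
    obtain ⟨k, hk, hφk⟩ := hφ.2 m (List.mem_filter.2 ⟨List.mem_flatMap.2
      ⟨i, List.mem_filter.2 ⟨hic, List.elem_eq_true_of_mem hi⟩, hm⟩, hdisj⟩)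
    exact hφk (hmt k hk).1
  rw [masksDisjoint_iff] at hmeet
  push Not at hmeet
  obtain ⟨k, hk, hkm⟩ := hmeet
  obtain ⟨a, ha, rfl⟩ := testBit_mask.1 hk
  have := hmt _ (by simpa using hkm)
  rw [edgeOf_edgeCode] at this
  exact ⟨_, List.mem_toFinset.2 (List.mem_map.2 ⟨a, ha, rfl⟩), this⟩

theorem isReduction (hf : (Set.Iio n).InjOn f)
    (hclosed : ∀ i ∈ closed, ∀ v, G.Adj (f i) v → ∃ j < n, f j = v)
    (hp : p.IsValid n closed)
    (hφ : (p.obstruction n closed).Holds fun k => edgeOf f k ∈ G.edgeSet) :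
    IsReduction G (p.edgesAtDeleted f) (p.packingFinset f) (p.transversalFinset f) where
  packing := isTrianglePacking hf hp hφ
  card_le := by
    rw [card_packingFinset hf hp hφ]
    exact card_transversalFinset_le.trans hp.2.2.2.2
  mem_or_mem t ht e he het := by
    obtain ⟨t', ht', rfl⟩ := List.mem_map.1 (List.mem_toFinset.1 ht)
    exact mem_transversalFinset_or ht' het (G.not_isDiag_of_mem_edgeSet he)
  exists_mem := by
    rintro t ht e ⟨i, hi, hie⟩ - het
    exact exists_mem_transversalFinset hclosed hp hφ ht hi (Finset.mem_sym2_iff.1 het _ hie)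

end Pattern

end Pattern

theorem Pattern.not_holds_obstruction {G : SimpleGraph V} {f : ℕ → V} {n : ℕ} {closed : List ℕ}
    {p : Pattern} (hG : IsMinCounterexample G) (hf : (Set.Iio n).InjOn f)
    (hclosed : ∀ i ∈ closed, ∀ v, G.Adj (f i) v → ∃ j < n, f j = v) (hp : p.IsValid n closed) :
    ¬ (p.obstruction n closed).Holds fun k => edgeOf f k ∈ G.edgeSet := fun hφ => by
  classical
  have hcard := card_packingFinset hf hp hφ
  rw [hG.eq_empty_of_isReduction (isReduction hf hclosed hp hφ), Finset.card_empty] at hcard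
  exact hp.2.1 (List.eq_nil_of_length_eq_zero hcard.symm)

/-! ### Configurations -/

section Config

/-- The complement of the graph on the neighbourhood of `x` contains no path of length two. -/
def NoCherry (G : SimpleGraph V) (x : V) : Prop :=
  ∀ ⦃u v w⦄, G.Adj x u → G.Adj x v → G.Adj x w → u ≠ v → u ≠ w → v ≠ w → G.Adj u v ∨ G.Adj u w

/-- A type of local configuration in a graph: disjoint cells of vertices with given `sizes`, of
which those listed in `closed` have no neighbours outside the cells and those in `noCherry` consist
of vertices satisfying `NoCherry`. The lists `adj` and `nonadj` prescribe which pairs of cells are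
completely joined and completely non-adjacent. -/
structure Config where
  sizes : List ℕ
  closed : List ℕ
  noCherry : List ℕ
  adj : List (ℕ × ℕ)
  nonadj : List (ℕ × ℕ)

/-- The map sending the entries of `l` to those of `l'`, in order, and fixing all other labels. -/
def relabelling (l l' : List ℕ) (i : ℕ) : ℕ := ((l.zip l').lookup i).getD i

/-- The pattern with labels changed along `σ`. -/
def Pattern.map (σ : ℕ → ℕ) (p : Pattern) : Pattern :=
  ⟨p.deleted.map σ, p.packing.map fun t => (σ t.1, σ t.2.1, σ t.2.2),
    p.extra.map fun e => (σ e.1, σ e.2)⟩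

/-- The images of the patterns under all relabellings that permute the lists in `block`. -/
def symmetrize (block : List (List ℕ)) (ps : List Pattern) : List Pattern :=
  block.permutations'.flatMap fun b => ps.map (Pattern.map (relabelling block.flatten b.flatten))

namespace Config

/-- The number of vertices of a configuration. -/
def order (K : Config) : ℕ := K.sizes.sum

/-- The vertices of a configuration are numbered consecutively, cell by cell. -/
def cellLabels (K : Config) : List (List ℕ) := K.sizes.splitLengths (List.range K.order)

/-- The labels of the vertices in the cell with index `c`. -/
def labels (K : Config) (c : ℕ) : List ℕ := K.cellLabels.getD c []

/-- The pairs of labels from two cells whose indices form a pair in `l`. -/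
def labelPairs (K : Config) (l : List (ℕ × ℕ)) : List (ℕ × ℕ) :=
  l.flatMap fun p => (K.labels p.1).product (K.labels p.2)

/-- The edges at the vertex labelled `i` that lie in no triangle. In a minimal counterexample each
edge lies in a triangle. -/
def edgeObstructions (K : Config) (i : ℕ) : List Obstruction :=
  (others K.order i).map fun j =>
    ⟨mask [(i, j)], ((others K.order i).filter (· != j)).map fun k => mask [(i, k), (j, k)]⟩

/-- The labels of the vertices that `K.adj` prescribes to be adjacent to the one labelled `i`. -/
def joinedLabels (K : Config) (i : ℕ) : List ℕ :=
  ((K.labelPairs K.adj).filter (·.1 == i)).map Prod.snd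

/-- The violations of `NoCherry` at the vertex labelled `i`. -/
def cherryObstructions (K : Config) (i : ℕ) : List Obstruction :=
  (K.joinedLabels i).flatMap fun u => ((K.joinedLabels i).filter (· != u)).flatMap fun v =>
    ((K.joinedLabels i).filter fun w => w != u && w != v).map fun w =>
      ⟨0, [mask [(u, v)], mask [(u, w)]]⟩

/-- Conditions on the edges of a configuration of type `K` that fail in a minimal counterexample.
Patterns whose side conditions fail are discarded. -/
def obstructions (K : Config) (ps : List Pattern) : List Obstruction :=
  let closed := K.closed.flatMap K.labels
  closed.flatMap K.edgeObstructions ++ (K.noCherry.flatMap K.labels).flatMap K.cherryObstructions ++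
    (ps.filter fun p => p.IsValid K.order closed).map (Pattern.obstruction K.order closed)

/-- Whether the search confirms, within depth `100`, that all edge sets compatible with `K` satisfy
one of the obstructions obtained from `ps` by the symmetries `blocks`. -/
def isRefutedBy (K : Config) (blocks : List (List (List ℕ))) (ps : List Pattern) : Bool :=
  Obstruction.search 100 (((K.obstructions (blocks.foldr symmetrize ps)).filterMap
    (Obstruction.assumeTrue (mask (K.labelPairs K.adj)))).filterMap
      (Obstruction.assumeFalse (mask (K.labelPairs K.nonadj))))

end Config

/-- Non-adjacent vertices with `a` common neighbours and `b` and `c` further neighbours. -/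
def nonadjConfig (a b c : ℕ) : Config :=
  ⟨[1, 1, a, b, c], [0, 1], [0, 1], [(0, 2), (0, 3), (1, 2), (1, 4)], [(0, 1), (0, 4), (1, 3)]⟩

/-- A vertex with `r + 3` neighbours, one of which is not adjacent to two others. -/
def cherryConfig (r : ℕ) : Config :=
  ⟨[1, 1, 2, r], [0], [], [(0, 1), (0, 2), (0, 3)], [(1, 2)]⟩

/-- A vertex of degree `d`. -/
def degreeConfig (d : ℕ) : Config := ⟨[1, d], [0], [0], [(0, 1)], []⟩

/-- Adjacent vertices, where the first has `r` further neighbours and the second has `e` neighbours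
that are not adjacent to the first. -/
def adjConfig (r e : ℕ) : Config :=
  ⟨[1, 1, r, e], [0, 1], [0], [(0, 1), (0, 2), (1, 3)], [(0, 3)]⟩

/-- Non-adjacent vertices of degree `5` with three common neighbours, one of which is adjacent only
to them and to their neighbours. -/
def twoLeavesConfig : Config :=
  ⟨[1, 1, 1, 2, 2, 2], [0, 1, 2], [0, 1], [(0, 2), (0, 3), (0, 4), (1, 2), (1, 3), (1, 5)],
    [(0, 1), (0, 5), (1, 4)]⟩

/-- Pairwise non-adjacent vertices of degree `5` with a common neighbour, such that any two have
three common neighbours and all three have seven neighbours in total. -/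
def threeLeavesConfig : Config :=
  ⟨[1, 1, 1, 1, 2, 2, 2], [0, 1, 2], [0, 1, 2],
    [(0, 3), (0, 4), (0, 5), (1, 3), (1, 4), (1, 6), (2, 3), (2, 5), (2, 6)],
    [(0, 1), (0, 2), (1, 2), (0, 6), (1, 5), (2, 4)]⟩

end Config

/-! ### Minimal counterexamples contain no reducible configuration -/

namespace Config

/-- A configuration with a certificate that no minimal counterexample contains it. -/
def IsReducible (K : Config) : Prop := ∃ blocks ps, K.isRefutedBy blocks ps = true

/-- The vertex sets `cells` form a configuration of type `K` in `G`. -/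
structure IsRealizedBy (K : Config) (G : SimpleGraph V) (cells : List (Finset V)) : Prop where
  card_eq : cells.map Finset.card = K.sizes
  disjoint : cells.Pairwise Disjoint
  not_adj_of_notMem : ∀ c ∈ K.closed, ∀ x ∈ cells.getD c ∅, ∀ y,
    (∀ C ∈ cells, y ∉ C) → ¬ G.Adj x y
  noCherry : ∀ c ∈ K.noCherry, ∀ x ∈ cells.getD c ∅, NoCherry G x
  adj : ∀ p ∈ K.adj, ∀ x ∈ cells.getD p.1 ∅, ∀ y ∈ cells.getD p.2 ∅, G.Adj x y
  not_adj : ∀ p ∈ K.nonadj, ∀ x ∈ cells.getD p.1 ∅, ∀ y ∈ cells.getD p.2 ∅, ¬ G.Adj x y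

/-- A numbering of the vertices in `cells` compatible with `K.labels`. -/
structure IsLabelling (K : Config) (cells : List (Finset V)) (f : ℕ → V) : Prop where
  injOn : (Set.Iio K.order).InjOn f
  mem_cell : ∀ c, ∀ i ∈ K.labels c, f i ∈ cells.getD c ∅
  exists_label : ∀ C ∈ cells, ∀ x ∈ C, ∃ i < K.order, f i = x

variable {K : Config} {G : SimpleGraph V} {cells : List (Finset V)} {f : ℕ → V}

theorem flatten_cellLabels : K.cellLabels.flatten = List.range K.order :=
  List.flatten_splitLengths _ _ List.length_range.le

theorem lt_order_of_mem_labels {c i : ℕ} (hi : i ∈ K.labels c) : i < K.order := by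
  rw [← List.mem_range, ← flatten_cellLabels, List.mem_flatten]
  rw [labels, List.getD_eq_getElem?_getD] at hi
  cases h : K.cellLabels[c]? with
  | none => simp [h] at hi
  | some l => exact ⟨l, List.mem_of_getElem? h, by simpa [h] using hi⟩

theorem mem_labelPairs {l : List (ℕ × ℕ)} {i j : ℕ} :
    (i, j) ∈ K.labelPairs l ↔ ∃ p ∈ l, i ∈ K.labels p.1 ∧ j ∈ K.labels p.2 := by
  simp only [labelPairs, List.mem_flatMap, List.pair_mem_product]

theorem length_flatten_toList (hcard : cells.map Finset.card = K.sizes) :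
    (cells.map Finset.toList).flatten.length = K.order := by
  rw [List.length_flatten, List.map_map, order, ← hcard]
  congr 2
  exact funext Finset.length_toList

theorem nodup_flatten_toList (hdisj : cells.Pairwise Disjoint) :
    (cells.map Finset.toList).flatten.Nodup := by
  refine List.nodup_flatten.2 ⟨by simp [Finset.nodup_toList], List.pairwise_map.2 ?_⟩
  exact hdisj.imp fun h x hs ht =>
    Finset.disjoint_left.1 h (Finset.mem_toList.1 hs) (Finset.mem_toList.1 ht)

theorem map_cellLabels (hcard : cells.map Finset.card = K.sizes)
    (hf : (List.range K.order).map f = (cells.map Finset.toList).flatten) :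
    K.cellLabels.map (List.map f) = cells.map Finset.toList := by
  refine List.eq_iff_flatten_eq.2 ⟨?_, ?_⟩
  · rw [← List.map_flatten, flatten_cellLabels, hf]
  · have hlen : K.cellLabels.map List.length = K.sizes :=
      List.map_splitLengths_length _ _ List.length_range.ge
    simpa [Function.comp_def, hcard] using hlen

theorem mem_cell_of_mem_labels (hf : K.cellLabels.map (List.map f) = cells.map Finset.toList)
    {c i : ℕ} (hi : i ∈ K.labels c) : f i ∈ cells.getD c ∅ := by
  have hmem := List.mem_map_of_mem (f := f) hi
  rwa [labels, ← List.getD_map (f := List.map f), hf, List.map_nil,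
    ← Finset.toList_empty, List.getD_map, Finset.mem_toList] at hmem

theorem exists_isLabelling [Nonempty V] (hcard : cells.map Finset.card = K.sizes)
    (hdisj : cells.Pairwise Disjoint) : ∃ f, K.IsLabelling cells f := by
  set l := (cells.map Finset.toList).flatten
  have hlen : l.length = K.order := length_flatten_toList hcard
  let f : ℕ → V := fun i => l.getD i (Classical.arbitrary V)
  have hf : (List.range K.order).map f = l := by
    refine List.ext_getElem (by simp [hlen]) fun i _ hi => ?_
    simp [f, hi]
  refine ⟨f, fun i hi j hj hij => ?_,
    fun _ _ => mem_cell_of_mem_labels (map_cellLabels hcard hf), fun C hC x hx => ?_⟩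
  · have hnodup : ((List.range K.order).map f).Nodup := hf ▸ nodup_flatten_toList hdisj
    exact List.inj_on_of_nodup_map hnodup (List.mem_range.2 hi) (List.mem_range.2 hj) hij
  · have hxl : x ∈ (List.range K.order).map f :=
      hf ▸ List.mem_flatten.2 ⟨_, List.mem_map_of_mem hC, Finset.mem_toList.2 hx⟩
    simpa using hxl

namespace IsLabelling

theorem adj (hf : K.IsLabelling cells f) (hK : K.IsRealizedBy G cells) :
    ∀ e ∈ K.labelPairs K.adj, G.Adj (f e.1) (f e.2) := by
  rintro ⟨i, j⟩ he
  obtain ⟨p, hp, hi, hj⟩ := mem_labelPairs.1 he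
  exact hK.adj p hp _ (hf.mem_cell _ _ hi) _ (hf.mem_cell _ _ hj)

theorem not_adj (hf : K.IsLabelling cells f) (hK : K.IsRealizedBy G cells) :
    ∀ e ∈ K.labelPairs K.nonadj, ¬ G.Adj (f e.1) (f e.2) := by
  rintro ⟨i, j⟩ he
  obtain ⟨p, hp, hi, hj⟩ := mem_labelPairs.1 he
  exact hK.not_adj p hp _ (hf.mem_cell _ _ hi) _ (hf.mem_cell _ _ hj)

theorem exists_label_of_adj (hf : K.IsLabelling cells f) (hK : K.IsRealizedBy G cells) :
    ∀ i ∈ K.closed.flatMap K.labels, ∀ v, G.Adj (f i) v → ∃ j < K.order, f j = v := by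
  intro i hi v hv
  obtain ⟨c, hc, hic⟩ := List.mem_flatMap.1 hi
  by_contra hnot
  exact hK.not_adj_of_notMem c hc _ (hf.mem_cell c i hic) v
    (fun C hC hvC => hnot (hf.exists_label C hC v hvC)) hv

end IsLabelling

theorem mem_joinedLabels {i j : ℕ} : j ∈ K.joinedLabels i ↔ (i, j) ∈ K.labelPairs K.adj := by
  simp only [joinedLabels, List.mem_map, List.mem_filter, Prod.exists, exists_eq_right, beq_iff_eq]

theorem lt_order_of_mem_joinedLabels {i j : ℕ} (hj : j ∈ K.joinedLabels i) : j < K.order := by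
  obtain ⟨p, -, -, hj⟩ := mem_labelPairs.1 (mem_joinedLabels.1 hj)
  exact lt_order_of_mem_labels hj

theorem not_holds_edgeObstructions (hG : IsMinCounterexample G) {i : ℕ}
    (hi : ∀ v, G.Adj (f i) v → ∃ j < K.order, f j = v) :
    ∀ o ∈ K.edgeObstructions i, ¬ o.Holds fun k => edgeOf f k ∈ G.edgeSet := by
  intro o ho hφ
  obtain ⟨j, -, rfl⟩ := List.mem_map.1 ho
  have hij : G.Adj (f i) (f j) :=
    of_edgeOf_of_testBit_mask (P := (· ∈ G.edgeSet)) hφ.1 _ (List.mem_singleton_self _)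
  obtain ⟨w, hiw, hjw⟩ := hG.exists_common_neighbor hij
  obtain ⟨k, hk, rfl⟩ := hi w hiw
  have hki : k ≠ i := by rintro rfl; exact hiw.ne rfl
  have hkj : k ≠ j := by rintro rfl; exact hjw.ne rfl
  obtain ⟨m, hm, hφm⟩ := hφ.2 _ (List.mem_map_of_mem (f := fun k => mask [(i, k), (j, k)])
    (List.mem_filter.2 ⟨mem_others.2 ⟨hk, hki⟩, bne_iff_ne.2 hkj⟩))
  exact hφm (edgeOf_of_testBit_mask (P := (· ∈ G.edgeSet)) (by simp [hiw, hjw]) hm)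

theorem not_holds_cherryObstructions (hf : K.IsLabelling cells f) (hK : K.IsRealizedBy G cells)
    {i : ℕ} (hi : NoCherry G (f i)) :
    ∀ o ∈ K.cherryObstructions i, ¬ o.Holds fun k => edgeOf f k ∈ G.edgeSet := by
  intro o ho hφ
  simp only [cherryObstructions, List.mem_flatMap, List.mem_map, List.mem_filter, bne_iff_ne,
    Bool.and_eq_true] at ho
  obtain ⟨u, hu, v, ⟨hv, hvu⟩, w, ⟨hw, hwu, hwv⟩, rfl⟩ := ho
  have hadj : ∀ {j}, j ∈ K.joinedLabels i → G.Adj (f i) (f j) :=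
    fun hj => hf.adj hK _ (mem_joinedLabels.1 hj)
  have hne : ∀ {j k}, j ∈ K.joinedLabels i → k ∈ K.joinedLabels i → j ≠ k → f j ≠ f k :=
    fun hj hk =>
      mt (hf.injOn (lt_order_of_mem_joinedLabels hj) (lt_order_of_mem_joinedLabels hk))
  have hnot : ∀ {j k}, mask [(j, k)] ∈ [mask [(u, v)], mask [(u, w)]] → ¬ G.Adj (f j) (f k) := by
    intro j k hjk hadj
    obtain ⟨m, hm, hφm⟩ := hφ.2 _ hjk
    refine hφm (edgeOf_of_testBit_mask (f := f) (P := (· ∈ G.edgeSet)) ?_ hm)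
    exact List.forall_mem_singleton.2 hadj
  obtain huv | huw := hi (hadj hu) (hadj hv) (hadj hw) (hne hu hv hvu.symm)
    (hne hu hw hwu.symm) (hne hv hw hwv.symm)
  · exact hnot (by simp) huv
  · exact hnot (by simp) huw

theorem not_holds_obstruction (hG : IsMinCounterexample G) (hK : K.IsRealizedBy G cells)
    (hf : K.IsLabelling cells f) {ps : List Pattern} :
    ∀ o ∈ K.obstructions ps, ¬ o.Holds fun k => edgeOf f k ∈ G.edgeSet := by
  intro o ho
  have hclosed := hf.exists_label_of_adj hK
  simp only [obstructions, List.mem_append, List.mem_flatMap, List.mem_map, List.mem_filter,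
    decide_eq_true_iff] at ho
  obtain (⟨i, hi, ho⟩ | ⟨i, ⟨c, hc, hi⟩, ho⟩) | ⟨p, ⟨-, hp⟩, rfl⟩ := ho
  · exact not_holds_edgeObstructions hG (hclosed i (List.mem_flatMap.2 hi)) o ho
  · exact not_holds_cherryObstructions hf hK (hK.noCherry c hc _ (hf.mem_cell c i hi)) o ho
  · exact p.not_holds_obstruction hG hf.injOn hclosed hp

theorem IsReducible.not_isRealizedBy [Nonempty V] (hK : K.IsReducible)
    (hG : IsMinCounterexample G) : ¬ K.IsRealizedBy G cells := by
  intro hcells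
  obtain ⟨blocks, ps, hsearch⟩ := hK
  obtain ⟨f, hf⟩ := exists_isLabelling hcells.card_eq hcells.disjoint
  obtain ⟨o, ho, hφ⟩ := Obstruction.exists_holds_of_filterMap
    (fun _ _ => .of_assumeTrue fun _ =>
      edgeOf_of_testBit_mask (P := (· ∈ G.edgeSet)) (hf.adj hcells))
    (Obstruction.exists_holds_of_filterMap
      (fun _ _ => .of_assumeFalse fun _ =>
        edgeOf_of_testBit_mask (P := (· ∉ G.edgeSet)) (hf.not_adj hcells))
      (Obstruction.exists_holds_of_search (fun k => edgeOf f k ∈ G.edgeSet) hsearch))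
  exact not_holds_obstruction hG hcells hf o ho hφ

end Config

/-! ### Certificates

The patterns in this section were found by a computer search. -/

theorem isReducible_degreeConfig_one : (degreeConfig 1).IsReducible :=
  ⟨[], [], by decide +kernel⟩

theorem isReducible_degreeConfig_two : (degreeConfig 2).IsReducible :=
  ⟨[],
   [⟨[0], [(0,1,2)], []⟩],
   by decide +kernel⟩

theorem isReducible_degreeConfig_three : (degreeConfig 3).IsReducible :=
  ⟨[[[1], [2], [3]]],
   [⟨[0], [(0,1,2)], [(0,3)]⟩],
   by decide +kernel⟩

theorem isReducible_degreeConfig_four : (degreeConfig 4).IsReducible :=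
  ⟨[[[1], [2], [3], [4]]],
   [⟨[0], [(0,1,2), (0,3,4)], [(0,1), (0,2)]⟩],
   by decide +kernel⟩

theorem isReducible_degreeConfig {d : ℕ} (hd : 1 ≤ d) (hd' : d ≤ 4) :
    (degreeConfig d).IsReducible := by
  interval_cases d
  exacts [isReducible_degreeConfig_one, isReducible_degreeConfig_two,
    isReducible_degreeConfig_three, isReducible_degreeConfig_four]

theorem isReducible_cherryConfig_zero : (cherryConfig 0).IsReducible :=
  ⟨[], [], by decide +kernel⟩

theorem isReducible_cherryConfig_one : (cherryConfig 1).IsReducible :=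
  ⟨[],
   [⟨[0], [(0,1,4)], [(0,4)]⟩, ⟨[0], [(0,1,4), (0,2,3)], [(0,4)]⟩],
   by decide +kernel⟩

theorem isReducible_cherryConfig_two : (cherryConfig 2).IsReducible :=
  ⟨[[[2], [3]], [[4], [5]]],
   [⟨[0], [(0,1,4), (0,2,3)], [(0,4), (0,5)]⟩, ⟨[0], [(0,1,5)], [(0,4)]⟩,
    ⟨[0], [(0,1,4)], [(0,4)]⟩, ⟨[0], [(0,1,4), (0,2,5)], [(0,4), (0,5)]⟩],
   by decide +kernel⟩

theorem isReducible_cherryConfig_three : (cherryConfig 3).IsReducible :=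
  ⟨[[[2], [3]], [[4], [5], [6]]],
   [⟨[0], [(0,1,4), (0,2,5)], [(0,4), (0,6)]⟩, ⟨[0], [(0,1,4), (0,5,6)], [(0,1), (0,4)]⟩,
    ⟨[0], [(0,1,4), (0,2,3)], [(0,4), (0,5)]⟩, ⟨[0], [(0,2,3), (0,4,5)], [(0,1), (0,2)]⟩,
    ⟨[0], [(0,1,4), (0,2,3)], [(0,1), (0,2)]⟩,
    ⟨[0], [(0,1,4), (0,2,5), (0,3,6)], [(0,4), (0,5), (0,6)]⟩,
    ⟨[0], [(0,1,4), (0,2,3)], [(0,2), (0,4)]⟩, ⟨[0], [(0,1,4), (0,2,3)], [(0,5), (0,6)]⟩,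
    ⟨[0], [(0,1,4), (0,2,5), (0,3,6)], [(0,2), (0,5), (0,6)]⟩,
    ⟨[0], [(0,1,4), (0,2,5), (0,3,6), (2,3,4)], [(0,5), (0,6)]⟩, ⟨[0], [(0,1,4)], [(0,4)]⟩,
    ⟨[0], [(0,1,4), (0,2,5)], [(0,5), (0,6)]⟩,
    ⟨[0], [(0,1,4), (0,2,3), (0,5,6)], [(0,4), (0,5), (0,6)]⟩,
    ⟨[0], [(0,1,4), (0,2,5)], [(0,4), (0,5)]⟩],
   by decide +kernel⟩

theorem isReducible_cherryConfig {r : ℕ} (hr : r ≤ 3) : (cherryConfig r).IsReducible := by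
  interval_cases r
  exacts [isReducible_cherryConfig_zero, isReducible_cherryConfig_one,
    isReducible_cherryConfig_two, isReducible_cherryConfig_three]

theorem isReducible_nonadjConfig_four_one_one : (nonadjConfig 4 1 1).IsReducible :=
  ⟨[[[2], [3], [4]]],
   [⟨[0, 1], [(0,2,3), (0,4,5), (1,2,4), (1,3,5)], [(0,6), (1,7), (2,5), (3,4)]⟩],
   by decide +kernel⟩

theorem isReducible_nonadjConfig_four_one_two : (nonadjConfig 4 1 2).IsReducible :=
  ⟨[[[2], [3], [4]]],
   [⟨[0, 1], [(0,2,3), (0,4,5), (1,2,4), (1,3,5), (1,7,8)], [(0,6), (1,7), (1,8), (2,5), (3,4)]⟩,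
    ⟨[0, 1], [(0,2,3), (0,4,5), (1,2,4), (1,3,5), (2,5,7), (3,4,7)], [(0,6), (1,8)]⟩,
    ⟨[0, 1], [(0,2,3), (0,4,5), (1,2,4), (1,3,5)], [(0,6), (1,7), (1,8), (2,5)]⟩,
    ⟨[0, 1], [(0,2,3), (0,4,5), (1,2,4), (1,3,5)], [(0,6), (1,7), (1,8), (3,4)]⟩],
   by decide +kernel⟩

theorem isReducible_nonadjConfig_five_zero_zero : (nonadjConfig 5 0 0).IsReducible :=
  ⟨[[[2], [3], [4]]],
   [⟨[0, 1], [(0,2,3), (0,4,5), (1,2,4), (1,3,5)], [(0,6), (1,6), (2,5), (3,4)]⟩],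
   by decide +kernel⟩

theorem isReducible_nonadjConfig_five_zero_one : (nonadjConfig 5 0 1).IsReducible :=
  ⟨[[[2], [3]], [[4], [5], [6]]],
   [⟨[0, 1], [(0,2,4), (0,5,6), (1,2,5), (1,3,7), (1,4,6)], [(0,3), (1,3), (1,7), (2,6), (4,5)]⟩],
   by decide +kernel⟩

theorem isReducible_nonadjConfig_five_one_one : (nonadjConfig 5 1 1).IsReducible :=
  ⟨[[[2], [3], [4], [5]]],
   [⟨[0, 1], [(0,2,3), (0,4,6), (0,5,7), (1,2,4), (1,3,6), (1,5,8)], [(0,5), (0,7), (1,5), (1,8),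
     (2,6), (3,4)]⟩],
   by decide +kernel⟩

theorem isReducible_nonadjConfig_six_zero_zero : (nonadjConfig 6 0 0).IsReducible :=
  ⟨[[[2, 3], [4, 5], [6, 7]]],
   [⟨[0, 1], [(0,2,4), (0,3,7), (1,2,7), (1,3,4), (1,5,6)], [(0,5), (0,6), (1,5), (1,6), (4,7)]⟩,
    ⟨[0, 1], [(0,2,3), (0,4,5), (1,2,5), (1,3,4), (1,6,7)], [(0,6), (0,7), (1,6), (1,7), (3,5)]⟩,
    ⟨[0, 1], [(0,2,3), (0,4,6), (0,5,7), (1,2,5), (1,3,7)], [(0,4), (0,6), (1,4), (1,6), (3,5)]⟩,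
    ⟨[0, 1], [(0,2,3), (0,4,7), (1,2,4), (1,3,7), (2,6,7), (3,4,6)], [(0,5), (1,5)]⟩],
   by decide +kernel⟩

theorem isReducible_nonadjConfig {a b c : ℕ} (ha : 4 ≤ a) (hab : 5 ≤ a + b) (hbc : b ≤ c)
    (hac : a + c ≤ 6) (habc : a + b + c ≤ 7) : (nonadjConfig a b c).IsReducible := by
  obtain ⟨rfl, rfl, rfl⟩ | ⟨rfl, rfl, rfl⟩ | ⟨rfl, rfl, rfl⟩ | ⟨rfl, rfl, rfl⟩ |
      ⟨rfl, rfl, rfl⟩ | ⟨rfl, rfl, rfl⟩ :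
      (a = 4 ∧ b = 1 ∧ c = 1) ∨ (a = 4 ∧ b = 1 ∧ c = 2) ∨ (a = 5 ∧ b = 0 ∧ c = 0) ∨
        (a = 5 ∧ b = 0 ∧ c = 1) ∨ (a = 5 ∧ b = 1 ∧ c = 1) ∨ (a = 6 ∧ b = 0 ∧ c = 0) := by
    omega
  exacts [isReducible_nonadjConfig_four_one_one, isReducible_nonadjConfig_four_one_two,
    isReducible_nonadjConfig_five_zero_zero, isReducible_nonadjConfig_five_zero_one,
    isReducible_nonadjConfig_five_one_one, isReducible_nonadjConfig_six_zero_zero]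

theorem isReducible_adjConfig_four_zero : (adjConfig 4 0).IsReducible :=
  ⟨[[[2], [3], [4], [5]]],
   [⟨[0, 1], [(0,1,2), (0,3,4), (1,3,5)], [(0,1), (0,2), (1,2), (4,5)]⟩],
   by decide +kernel⟩

theorem isReducible_adjConfig_four_one : (adjConfig 4 1).IsReducible :=
  ⟨[[[2], [3], [4], [5]]],
   [⟨[0, 1], [(0,1,2), (0,3,4), (1,5,6)], [(0,2), (0,5), (1,2), (1,3)]⟩,
    ⟨[0, 1], [(0,1,2), (0,3,4), (1,3,5), (1,4,6)], [(0,1), (0,2), (1,2), (1,6), (4,5)]⟩],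
   by decide +kernel⟩

theorem isReducible_adjConfig_four_two : (adjConfig 4 2).IsReducible :=
  ⟨[[[2], [3], [4], [5]]],
   [⟨[0, 1], [(0,1,2), (0,3,4), (1,3,5), (1,4,6), (2,4,5)], [(0,1), (1,6), (1,7), (2,3)]⟩,
    ⟨[0, 1], [(0,1,2), (0,3,4), (1,3,5), (1,4,7), (2,4,5)], [(0,1), (1,6), (1,7), (2,3)]⟩,
    ⟨[0, 1], [(0,1,2), (0,3,4), (1,3,5), (1,6,7)], [(0,2), (0,4), (1,2), (1,3), (1,5)]⟩,
    ⟨[0, 1], [(0,1,2), (0,3,4), (1,3,5)], [(0,2), (0,5), (1,2), (1,3)]⟩,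
    ⟨[0, 1], [(0,1,2), (0,3,4), (1,3,6), (1,5,7)], [(0,2), (0,5), (1,2), (1,3), (1,6)]⟩,
    ⟨[0, 1], [(0,2,3), (0,4,5), (1,2,4), (1,3,5)], [(0,1), (1,6), (1,7), (2,5)]⟩],
   by decide +kernel⟩

theorem isReducible_adjConfig_five_zero : (adjConfig 5 0).IsReducible :=
  ⟨[[[2], [3], [4]]],
   [⟨[0, 1], [(0,1,2), (0,3,4), (0,5,6), (1,3,5)], [(0,1), (0,2), (0,6), (1,2), (4,5)]⟩,
    ⟨[0, 1], [(0,1,6), (0,2,3), (0,4,5), (1,2,4), (1,3,5)], [(0,1), (0,2), (0,6), (1,2), (1,6),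
     (3,4)]⟩,
    ⟨[0, 1], [(0,1,6), (0,2,3), (0,4,5), (1,2,4)], [(0,1), (0,5), (0,6), (1,6), (3,4)]⟩,
    ⟨[0, 1], [(0,1,6), (0,2,3), (0,4,5), (1,2,5)], [(0,1), (0,3), (0,6), (1,6), (2,4)]⟩],
   by decide +kernel⟩

theorem isReducible_adjConfig_five_one : (adjConfig 5 1).IsReducible :=
  ⟨[[[2], [3], [4], [5]]],
   [⟨[0, 1], [(0,1,2), (0,3,4), (0,5,6), (1,3,5), (1,4,7)], [(0,1), (0,2), (0,6), (1,2), (1,7),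
     (4,5)]⟩,
    ⟨[0, 1], [(0,1,2), (0,3,4), (0,5,6), (1,3,5), (1,6,7)], [(0,1), (0,2), (0,4), (1,2), (1,7),
     (3,6)]⟩,
    ⟨[0, 1], [(0,1,2), (0,3,4), (0,5,6), (1,3,6), (1,4,7)], [(0,1), (0,2), (0,5), (1,2), (1,7),
     (4,6)]⟩,
    ⟨[0, 1], [(0,1,6), (0,2,3), (0,4,5), (1,2,4), (1,3,5)], [(0,1), (0,6), (1,6), (1,7), (2,5),
     (3,4)]⟩,
    ⟨[0, 1], [(0,1,6), (0,2,3), (0,4,5), (1,2,4), (1,3,7)], [(0,1), (0,5), (0,6), (1,6), (1,7),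
     (3,4)]⟩],
   by decide +kernel⟩

theorem isReducible_adjConfig {r e : ℕ} (hr : 4 ≤ r) (hr' : r ≤ 5) (hre : r + e ≤ 6) :
    (adjConfig r e).IsReducible := by
  obtain ⟨rfl, rfl⟩ | ⟨rfl, rfl⟩ | ⟨rfl, rfl⟩ | ⟨rfl, rfl⟩ | ⟨rfl, rfl⟩ :
      (r = 4 ∧ e = 0) ∨ (r = 4 ∧ e = 1) ∨ (r = 4 ∧ e = 2) ∨ (r = 5 ∧ e = 0) ∨
        (r = 5 ∧ e = 1) := by
    omega
  exacts [isReducible_adjConfig_four_zero, isReducible_adjConfig_four_one,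
    isReducible_adjConfig_four_two, isReducible_adjConfig_five_zero,
    isReducible_adjConfig_five_one]

theorem isReducible_twoLeavesConfig : twoLeavesConfig.IsReducible :=
  ⟨[[[3], [4]], [[5], [6]], [[7], [8]], [[0, 5, 6], [1, 7, 8]]],
   [⟨[0, 2], [(0,2,5), (0,3,6), (1,2,7), (2,4,6)], [(0,5), (2,3), (2,4), (2,6), (2,8)]⟩,
    ⟨[0, 1, 2], [(0,2,5), (0,3,4), (1,2,7), (1,3,8), (2,4,8)], [(0,5), (0,6), (1,7), (2,3), (2,4),
     (2,5), (2,8)]⟩,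
    ⟨[0, 1], [(0,2,3), (0,4,5), (1,2,4), (1,7,8)], [(0,5), (0,6), (1,7), (1,8)]⟩,
    ⟨[0, 2], [(0,2,3), (0,4,5), (1,2,4), (2,5,6), (2,7,8)], [(0,2), (0,3), (2,3), (2,7), (2,8),
     (4,6)]⟩,
    ⟨[0, 2], [(0,2,3), (0,4,5), (1,2,4), (2,5,7), (2,6,8)], [(0,2), (0,3), (2,3), (2,7), (2,8),
     (4,6)]⟩,
    ⟨[0, 1], [(0,2,3), (0,4,5), (1,2,7), (1,3,4)], [(0,5), (0,6), (1,7), (1,8)]⟩,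
    ⟨[0, 2], [(0,2,3), (0,4,5), (1,2,4), (2,5,6)], [(0,2), (0,3), (2,3), (2,7), (4,6)]⟩,
    ⟨[0, 2], [(0,2,5), (0,3,6), (1,2,3), (2,4,7)], [(0,4), (0,5), (1,2), (2,3), (2,5)]⟩],
   by decide +kernel⟩

theorem isReducible_threeLeavesConfig : threeLeavesConfig.IsReducible :=
  ⟨[[[4], [5]], [[6], [7]], [[8], [9]], [[0, 8, 9], [1, 6, 7], [2, 4, 5]]],
   [⟨[0, 1], [(0,3,4), (0,5,6), (1,4,5), (1,8,9), (3,5,8)], [(0,6), (0,7), (1,9)]⟩,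
    ⟨[0, 1, 2], [(0,3,4), (0,5,6), (1,3,8), (1,4,5), (2,3,6), (2,8,9), (3,5,9), (4,6,9)], [(0,7),
     (1,8), (2,7), (2,8)]⟩,
    ⟨[0, 1], [(0,3,4), (0,5,6), (1,3,5), (1,4,8)], [(0,6), (0,7), (1,8), (1,9)]⟩],
   by decide +kernel⟩

/-! ### Vertices of small degree -/

section FiniteSets

variable [DecidableEq V]

theorem card_parts_of_card_inter_eq_three {X Y : Finset V} {w : V} (hX : X.card = 5)
    (hY : Y.card = 5) (hXY : (X ∩ Y).card = 3) (hwX : w ∈ X) (hwY : w ∈ Y) :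
    ((X ∩ Y).erase w).card = 2 ∧ (X \ Y).card = 2 ∧ (Y \ X).card = 2 := by
  have hinter := Finset.card_erase_add_one (Finset.mem_inter.2 ⟨hwX, hwY⟩)
  have hX' := Finset.card_sdiff_add_card_inter X Y
  have hY' := Finset.card_sdiff_add_card_inter Y X
  rw [Finset.inter_comm] at hY'
  omega

theorem sdiff_subset_of_card_le {X Y Z : Finset V} (hZ : Z ⊆ X ∪ Y)
    (hcard : (X \ Y).card ≤ (Z \ Y).card) : X \ Y ⊆ Z := by
  have hsub : Z \ Y ⊆ X \ Y := fun v hv => by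
    obtain ⟨hvZ, hvY⟩ := Finset.mem_sdiff.1 hv
    exact Finset.mem_sdiff.2 ⟨(Finset.mem_union.1 (hZ hvZ)).resolve_right hvY, hvY⟩
  exact Finset.eq_of_subset_of_card_le hsub hcard ▸ Finset.sdiff_subset

theorem eq_insert_symmDiff_of_card_inter_eq_three {X Y Z : Finset V} {w : V} (hX : X.card = 5)
    (hY : Y.card = 5) (hZ : Z.card = 5) (hXY : (X ∩ Y).card = 3) (hXZ : (X ∩ Z).card = 3)
    (hYZ : (Y ∩ Z).card = 3) (hcard : (X ∪ Y ∪ Z).card ≤ 7) (hwX : w ∈ X) (hwY : w ∈ Y)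
    (hwZ : w ∈ Z) : Z = insert w (symmDiff X Y) := by
  obtain ⟨-, hXY₂, hYX₂⟩ := card_parts_of_card_inter_eq_three hX hY hXY hwX hwY
  obtain ⟨-, -, hZX₂⟩ := card_parts_of_card_inter_eq_three hX hZ hXZ hwX hwZ
  obtain ⟨-, -, hZY₂⟩ := card_parts_of_card_inter_eq_three hY hZ hYZ hwY hwZ
  have hunion := Finset.card_union_add_card_inter X Y
  have hZXY : Z ⊆ X ∪ Y := Finset.union_eq_left.1
    (Finset.eq_of_subset_of_card_le Finset.subset_union_left (by omega)).symm
  have hsub : insert w (symmDiff X Y) ⊆ Z := Finset.insert_subset hwZ <| Finset.union_subset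
    (sdiff_subset_of_card_le hZXY (by omega))
    (sdiff_subset_of_card_le (Finset.union_comm X Y ▸ hZXY) (by omega))
  refine (Finset.eq_of_subset_of_card_le hsub ?_).symm
  rw [Finset.card_insert_of_notMem (by simp [Finset.mem_symmDiff, hwX, hwY]), symmDiff,
    Finset.sup_eq_union, Finset.card_union_of_disjoint disjoint_sdiff_sdiff]
  omega

end FiniteSets

section Local

variable {G : SimpleGraph V} {x y : V} [Fintype V] [DecidableRel G.Adj]

namespace IsMinCounterexample

theorem noCherry (hG : IsMinCounterexample G) (hx : G.degree x ≤ 6) : NoCherry G x := by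
  classical
  intro u v w hxu hxv hxw huv huw hvw
  by_contra! hnot
  have hsub : ({u, v, w} : Finset V) ⊆ G.neighborFinset x := by
    simp [Finset.insert_subset_iff, hxu, hxv, hxw]
  have hcard := Finset.card_sdiff_add_card_eq_card hsub
  rw [Finset.card_eq_three.2 ⟨u, v, w, huv, huw, hvw, rfl⟩, card_neighborFinset_eq_degree] at hcard
  have : Nonempty V := ⟨x⟩
  refine (isReducible_cherryConfig (r := (G.neighborFinset x \ {u, v, w}).card)
    (by omega)).not_isRealizedBy hG (cells := [{x}, {u}, {v, w}, G.neighborFinset x \ {u, v, w}])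
    ⟨?_, ?_, ?_, ?_, ?_, ?_⟩
  · simp [cherryConfig, hvw]
  · simp [hxu.ne, hxv.ne, hxw.ne, huv, huw]
  · simp +contextual [cherryConfig]
  · simp [cherryConfig]
  · simp +contextual [cherryConfig, *]
  · simp +contextual [cherryConfig, *]

theorem five_le_degree (hG : IsMinCounterexample G) (hx : x ∈ G.support) (hx' : G.degree x ≤ 6) :
    5 ≤ G.degree x := by
  classical
  by_contra! hlt
  have hpos : 0 < G.degree x := (G.degree_pos_iff_exists_adj x).2 hx
  have : Nonempty V := ⟨x⟩
  refine (isReducible_degreeConfig hpos (by omega)).not_isRealizedBy hG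
    (cells := [{x}, G.neighborFinset x]) ⟨?_, ?_, ?_, ?_, ?_, ?_⟩ <;>
    simp +contextual [degreeConfig, hG.noCherry hx']

variable [DecidableEq V]

theorem degrees_of_not_adj (hG : IsMinCounterexample G) (hne : x ≠ y)
    (hxy : ¬ G.Adj x y) (hx : 5 ≤ G.degree x) (hx' : G.degree x ≤ 6) (hy : 5 ≤ G.degree y)
    (hy' : G.degree y ≤ 6) (hcard : (G.neighborFinset x ∪ G.neighborFinset y).card ≤ 7) :
    G.degree x = 5 ∧ G.degree y = 5 ∧ (G.neighborFinset x ∩ G.neighborFinset y).card = 3 := by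
  wlog hle : G.degree x ≤ G.degree y generalizing x y
  · obtain ⟨hy5, hx5, hcap⟩ := this hne.symm (fun h => hxy h.symm) hy hy' hx hx'
      (by rwa [Finset.union_comm]) (by omega)
    exact ⟨hx5, hy5, by rwa [Finset.inter_comm]⟩
  by_contra hnot
  have hunion := Finset.card_union_add_card_inter (G.neighborFinset x) (G.neighborFinset y)
  have hx_sdiff := Finset.card_inter_add_card_sdiff (G.neighborFinset x) (G.neighborFinset y)
  have hy_sdiff := Finset.card_inter_add_card_sdiff (G.neighborFinset y) (G.neighborFinset x)
  rw [Finset.inter_comm] at hy_sdiff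
  simp only [card_neighborFinset_eq_degree] at hunion hx_sdiff hy_sdiff
  have hyx : ¬ G.Adj y x := fun h => hxy h.symm
  have : Nonempty V := ⟨x⟩
  refine (isReducible_nonadjConfig (a := (G.neighborFinset x ∩ G.neighborFinset y).card)
    (b := (G.neighborFinset x \ G.neighborFinset y).card)
    (c := (G.neighborFinset y \ G.neighborFinset x).card)
    (by omega) (by omega) (by omega) (by omega) (by omega)).not_isRealizedBy hG
    (cells := [{x}, {y}, G.neighborFinset x ∩ G.neighborFinset y,
      G.neighborFinset x \ G.neighborFinset y, G.neighborFinset y \ G.neighborFinset x])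
      ⟨?_, ?_, ?_, ?_, ?_, ?_⟩
  · simp [nonadjConfig]
  · simp +contextual [hne, hxy, hyx, Finset.disjoint_left]
  · simp +contextual [nonadjConfig]
  · simp [nonadjConfig, hG.noCherry, *]
  · simp +contextual [nonadjConfig]
  · simp +contextual [nonadjConfig, hxy]

theorem seven_le_card_union_of_not_adj (hG : IsMinCounterexample G) (hx : x ∈ G.support)
    (hy : y ∈ G.support) (hne : x ≠ y) (hxy : ¬ G.Adj x y) (hx' : G.degree x ≤ 6)
    (hy' : G.degree y ≤ 6) : 7 ≤ (G.neighborFinset x ∪ G.neighborFinset y).card := by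
  by_contra! hlt
  obtain ⟨hx5, hy5, hcap⟩ := hG.degrees_of_not_adj hne hxy (hG.five_le_degree hx hx') hx'
    (hG.five_le_degree hy hy') hy' (by omega)
  have hunion := Finset.card_union_add_card_inter (G.neighborFinset x) (G.neighborFinset y)
  rw [card_neighborFinset_eq_degree, card_neighborFinset_eq_degree] at hunion
  omega

theorem nine_le_card_union_of_adj (hG : IsMinCounterexample G) (hxy : G.Adj x y)
    (hx : G.degree x ≤ 6) : 9 ≤ (G.neighborFinset x ∪ G.neighborFinset y).card := by
  by_contra! hcard
  have hdeg := hG.five_le_degree ⟨y, hxy⟩ hx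
  have hmem : x ∈ G.neighborFinset y \ G.neighborFinset x := by simp [hxy.symm]
  have hx_erase := Finset.card_erase_add_one ((G.mem_neighborFinset x y).2 hxy)
  have hy_erase := Finset.card_erase_add_one hmem
  have hunion := Finset.card_sdiff_add_card (G.neighborFinset y) (G.neighborFinset x)
  rw [Finset.union_comm] at hcard
  rw [card_neighborFinset_eq_degree] at hx_erase hunion
  have : Nonempty V := ⟨x⟩
  refine (isReducible_adjConfig (r := ((G.neighborFinset x).erase y).card)
    (e := ((G.neighborFinset y \ G.neighborFinset x).erase x).card)
    (by omega) (by omega) (by omega)).not_isRealizedBy hG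
    (cells := [{x}, {y}, (G.neighborFinset x).erase y,
      (G.neighborFinset y \ G.neighborFinset x).erase x]) ⟨?_, ?_, ?_, ?_, ?_, ?_⟩
  · simp [adjConfig]
  · simp +contextual [hxy.ne, Finset.disjoint_left]
  · simp +contextual [adjConfig]
  · simp [adjConfig, hG.noCherry hx]
  · simp +contextual [adjConfig, hxy]
  · simp +contextual [adjConfig]

theorem exists_adj_of_card_inter_eq_three (hG : IsMinCounterexample G) {w : V} (hne : x ≠ y)
    (hxy : ¬ G.Adj x y) (hxw : G.Adj x w) (hyw : G.Adj y w) (hx : G.degree x = 5)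
    (hy : G.degree y = 5) (hcap : (G.neighborFinset x ∩ G.neighborFinset y).card = 3) :
    ∃ v, G.Adj w v ∧ v ≠ x ∧ v ≠ y ∧ ¬ G.Adj x v ∧ ¬ G.Adj y v := by
  by_contra! hno
  have hw : ∀ v, G.Adj w v → v = x ∨ v = y ∨ G.Adj x v ∨ G.Adj y v := by tauto
  obtain ⟨hI, hJ, hK⟩ := card_parts_of_card_inter_eq_three (X := G.neighborFinset x)
    (Y := G.neighborFinset y) (w := w) (by simpa using hx) (by simpa using hy) hcap
    (by simpa using hxw) (by simpa using hyw)
  have hyx : ¬ G.Adj y x := fun h => hxy h.symm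
  have : Nonempty V := ⟨x⟩
  refine isReducible_twoLeavesConfig.not_isRealizedBy hG
    (cells := [{x}, {y}, {w}, (G.neighborFinset x ∩ G.neighborFinset y).erase w,
      G.neighborFinset x \ G.neighborFinset y, G.neighborFinset y \ G.neighborFinset x])
    ⟨?_, ?_, ?_, ?_, ?_, ?_⟩
  · simp [twoLeavesConfig, hI, hJ, hK]
  · simp +contextual [hne, hxy, hyx, hxw, hyw, hxw.ne, hyw.ne, Finset.disjoint_left]
  · simp +contextual [twoLeavesConfig, fun v => mt (hw v)]
  · simp [twoLeavesConfig, hG.noCherry, *]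
  · simp +contextual [twoLeavesConfig, *]
  · simp +contextual [twoLeavesConfig, hxy]

theorem eight_le_card_union_of_card_inter_eq_three (hG : IsMinCounterexample G) {z w : V}
    (hxy_ne : x ≠ y) (hxz_ne : x ≠ z) (hyz_ne : y ≠ z)
    (hxy : ¬ G.Adj x y) (hxz : ¬ G.Adj x z) (hyz : ¬ G.Adj y z)
    (hxw : G.Adj x w) (hyw : G.Adj y w) (hzw : G.Adj z w) (hx : G.degree x = 5)
    (hy : G.degree y = 5) (hz : G.degree z = 5)
    (hcap_xy : (G.neighborFinset x ∩ G.neighborFinset y).card = 3)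
    (hcap_xz : (G.neighborFinset x ∩ G.neighborFinset z).card = 3)
    (hcap_yz : (G.neighborFinset y ∩ G.neighborFinset z).card = 3) :
    8 ≤ (G.neighborFinset x ∪ G.neighborFinset y ∪ G.neighborFinset z).card := by
  by_contra! hlt
  have hcard := Nat.le_of_lt_succ hlt
  have hX : (G.neighborFinset x).card = 5 := by simpa using hx
  have hY : (G.neighborFinset y).card = 5 := by simpa using hy
  have hZ : (G.neighborFinset z).card = 5 := by simpa using hz
  have hwX := (G.mem_neighborFinset x w).2 hxw
  have hwY := (G.mem_neighborFinset y w).2 hyw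
  have hz' : ∀ v, G.Adj z v ↔ v = w ∨ G.Adj x v ∧ ¬ G.Adj y v ∨ G.Adj y v ∧ ¬ G.Adj x v := by
    simpa [Finset.ext_iff, Finset.mem_symmDiff] using eq_insert_symmDiff_of_card_inter_eq_three
      hX hY hZ hcap_xy hcap_xz hcap_yz hcard hwX hwY ((G.mem_neighborFinset z w).2 hzw)
  obtain ⟨hI, hJ, hK⟩ := card_parts_of_card_inter_eq_three hX hY hcap_xy hwX hwY
  have hyx : ¬ G.Adj y x := fun h => hxy h.symm
  have : Nonempty V := ⟨x⟩
  refine isReducible_threeLeavesConfig.not_isRealizedBy hG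
    (cells := [{x}, {y}, {z}, {w}, (G.neighborFinset x ∩ G.neighborFinset y).erase w,
      G.neighborFinset x \ G.neighborFinset y, G.neighborFinset y \ G.neighborFinset x])
    ⟨?_, ?_, ?_, ?_, ?_, ?_⟩
  · simp [threeLeavesConfig, hI, hJ, hK]
  · simp +contextual [hxw.ne, hyw.ne, hzw.ne, Finset.disjoint_left, *]
  · simp +contextual [threeLeavesConfig, hz']
  · simp [threeLeavesConfig, hG.noCherry, hx, hy, hz]
  · simp +contextual [threeLeavesConfig, *]
  · simp +contextual [threeLeavesConfig, *]

end IsMinCounterexample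

end Local

/-! ### Leaves of tree decompositions -/

section Tree

variable {α : Type*} {T : SimpleGraph α} {r s t : α}

theorem exists_isPath_of_connected_induce {B : Set α} (hB : (T.induce B).Connected) (ht : t ∈ B)
    (hs : s ∈ B) : ∃ p : T.Walk t s, p.IsPath ∧ ∀ a ∈ p.support, a ∈ B := by
  obtain ⟨p, hp⟩ := hB.exists_isPath ⟨t, ht⟩ ⟨s, hs⟩
  refine ⟨p.map (Embedding.induce (G := T) B).toHom,
    hp.map (Embedding.induce (G := T) B).injective, fun a ha => ?_⟩
  obtain ⟨b, -, rfl⟩ := List.mem_map.1 ((Walk.support_map _ p).symm ▸ ha)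
  exact b.2

theorem dist_lt_of_mem_support {p : T.Walk s r} (hp : p.length = T.dist s r) {a : α}
    (ha : a ∈ p.support) (has : a ≠ s) : T.dist a r < T.dist s r := by
  classical
  exact hp ▸ (dist_le (p.dropUntil a ha)).trans_lt (Walk.length_dropUntil_lt_length ha has)

theorem exists_isPath_through_closest (hT : T.Connected) {B : Set α}
    (hB : (T.induce B).Connected) (hs : s ∈ B) (hmin : ∀ a ∈ B, T.dist s r ≤ T.dist a r)
    (ht : t ∈ B) :
    ∃ p : T.Walk t r, p.IsPath ∧ s ∈ p.support ∧
      ∀ a ∈ p.support, a ∈ B ∨ T.dist a r < T.dist s r := by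
  obtain ⟨p, hp, hpB⟩ := exists_isPath_of_connected_induce hB ht hs
  obtain ⟨q, hq, hqdist⟩ := hT.exists_path_of_dist s r
  have hnodup : (s :: q.support.tail).Nodup := q.cons_tail_support ▸ hq.support_nodup
  refine ⟨p.append q, ?_, by simp, fun a ha => ?_⟩
  · rw [Walk.isPath_def, Walk.support_append]
    refine List.Nodup.append hp.support_nodup hnodup.of_cons fun a hap haq => ?_
    have has : a ≠ s := fun has => (List.nodup_cons.1 hnodup).1 (has ▸ haq)
    exact (hmin a (hpB a hap)).not_gt
      (dist_lt_of_mem_support hqdist (List.mem_of_mem_tail haq) has)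
  · obtain hap | haq := (Walk.mem_support_append_iff _ _).1 ha
    · exact .inl (hpB a hap)
    · obtain rfl | has := eq_or_ne a s
      · exact .inl hs
      · exact .inr (dist_lt_of_mem_support hqdist haq has)

end Tree

end Tuza

namespace TreeDecomp

variable {G : SimpleGraph V} {α : Type}

/-- Adjacency, or equality, in the chordal graph obtained from `G` by completing all bags. -/
def ShareBag (D : TreeDecomp G α) (u v : V) : Prop := ∃ t, u ∈ D.bag t ∧ v ∈ D.bag t

/-- `v` is simplicial in the subgraph induced on `U` by the chordal graph `D.ShareBag`. -/
def IsSimplicialIn (D : TreeDecomp G α) (U : Set V) (v : V) : Prop :=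
  v ∈ U ∧ ∃ t, v ∈ D.bag t ∧ ∀ u ∈ U, D.ShareBag u v → u ∈ D.bag t

/-- The vertices that are simplicial once the isolated vertices of `G` are discarded. -/
def leaves (D : TreeDecomp G α) : Set V := {v | D.IsSimplicialIn G.support v}

/-- A tree decomposition is also one of every subgraph. -/
def ofLE {H : SimpleGraph V} (D : TreeDecomp H α) (h : G ≤ H) : TreeDecomp G α :=
  { D with edge_mem := fun _ _ huv => D.edge_mem (h huv) }

variable {D : TreeDecomp G α} {u v x y : V}

theorem ShareBag.symm : D.ShareBag u v → D.ShareBag v u := fun ⟨t, hu, hv⟩ => ⟨t, hv, hu⟩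

theorem shareBag_of_adj (huv : G.Adj u v) : D.ShareBag u v := D.edge_mem huv

theorem exists_closest_bag (D : TreeDecomp G α) (r : α) (v : V) :
    ∃ s, v ∈ D.bag s ∧ ∀ a, v ∈ D.bag a → D.T.dist s r ≤ D.T.dist a r := by
  obtain ⟨t, ht⟩ := D.covers v
  exact ⟨_, Function.argminOn_mem (D.T.dist · r) {t | v ∈ D.bag t} ⟨t, ht⟩,
    fun a ha => Function.argminOn_le (D.T.dist · r) {t | v ∈ D.bag t} ha⟩

theorem exists_isSimplicialIn [Finite V] (D : TreeDecomp G α) {U : Set V} (hU : U.Nonempty) :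
    ∃ v, D.IsSimplicialIn U v := by
  -- A vertex works if, of its bags, the one closest to a root `r` is as far from `r` as possible.
  obtain ⟨r⟩ := D.isTree.connected.nonempty
  choose top htop hmin using D.exists_closest_bag r
  obtain ⟨v, hv, hvmax⟩ := U.exists_max_image (fun v => D.T.dist (top v) r) U.toFinite hU
  refine ⟨v, hv, top v, htop v, ?_⟩
  rintro u hu ⟨t, hut, hvt⟩
  obtain ⟨p, hp, hpv, -⟩ := Tuza.exists_isPath_through_closest D.isTree.connected
    (D.subtree v) (htop v) (hmin v) hvt
  obtain ⟨q, hq, -, hqu⟩ := Tuza.exists_isPath_through_closest D.isTree.connected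
    (D.subtree u) (htop u) (hmin u) hut
  obtain rfl : p = q := congrArg Subtype.val
    ((D.isTree.isAcyclic.subsingleton_path t r).elim ⟨p, hp⟩ ⟨q, hq⟩)
  exact (hqu _ hpv).resolve_right (hvmax u hu).not_gt

theorem mem_bag_of_adj {t : α} (ht : ∀ u ∈ G.support, D.ShareBag u x → u ∈ D.bag t)
    (hxu : G.Adj x u) : u ∈ D.bag t :=
  ht u ⟨x, hxu.symm⟩ (shareBag_of_adj hxu.symm)

theorem degree_le_of_mem_leaves [Fintype V] [DecidableRel G.Adj] {k : ℕ}
    (hD : ∀ t, (D.bag t).card ≤ k + 1) (hx : x ∈ D.leaves) : G.degree x ≤ k := by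
  classical
  obtain ⟨-, t, hxt, ht⟩ := hx
  have hsub : G.neighborFinset x ⊆ (D.bag t).erase x := fun u hu => by
    rw [mem_neighborFinset] at hu
    exact Finset.mem_erase.2 ⟨hu.ne', mem_bag_of_adj ht hu⟩
  have hcard := Finset.card_le_card hsub
  rw [card_neighborFinset_eq_degree, Finset.card_erase_of_mem hxt] at hcard
  have := hD t
  omega

end TreeDecomp

namespace Tuza

section Leaves

variable {G : SimpleGraph V} {α : Type} {D : TreeDecomp G α} {x y w : V}

theorem IsMinCounterexample.exists_adj (hG : IsMinCounterexample G) : ∃ u v, G.Adj u v := by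
  classical
  by_contra! hno
  refine hG.not_hasBound ⟨∅, ∅, ⟨by simp, fun t ht => ?_⟩, ⟨by simp, by simp⟩, by simp⟩
  obtain ⟨a, b, c, hab, -⟩ := is3Clique_iff.1 ht
  exact absurd hab (hno a b)

theorem neighborFinset_union_subset_bag [Fintype V] [DecidableEq V] [DecidableRel G.Adj] {t : α}
    (ht : ∀ u ∈ G.support, D.ShareBag u x → u ∈ D.bag t) (hy : y ∈ D.leaves)
    (hx : x ∈ G.support) (hxy : D.ShareBag x y) :
    G.neighborFinset x ∪ G.neighborFinset y ⊆ D.bag t := by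
  obtain ⟨-, s, -, hs⟩ := hy
  refine Finset.union_subset (fun u hu => ?_) fun u hu => ?_ <;> rw [mem_neighborFinset] at hu
  · exact TreeDecomp.mem_bag_of_adj ht hu
  · exact ht u ⟨y, hu.symm⟩ ⟨s, TreeDecomp.mem_bag_of_adj hs hu, hs x hx hxy⟩

theorem IsMinCounterexample.eq_of_shareBag [Finite V] (hG : IsMinCounterexample G)
    (hD : ∀ t, (D.bag t).card ≤ 7) (hx : x ∈ D.leaves) (hy : y ∈ D.leaves)
    (hxy : D.ShareBag x y) : x = y := by
  classical
  have := Fintype.ofFinite V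
  by_contra hne
  have hx6 := TreeDecomp.degree_le_of_mem_leaves hD hx
  have hy6 := TreeDecomp.degree_le_of_mem_leaves hD hy
  obtain ⟨hxG, t, hxt, ht⟩ := id hx
  have hcard := hD t
  have hsub := neighborFinset_union_subset_bag ht hy hxG hxy
  by_cases hadj : G.Adj x y
  · have hnine := hG.nine_le_card_union_of_adj hadj hx6
    have hle := Finset.card_le_card hsub
    omega
  · have hx_notMem : x ∉ G.neighborFinset x ∪ G.neighborFinset y := by
      simpa [G.adj_comm y x] using hadj
    have hseven := hG.seven_le_card_union_of_not_adj hxG hy.1 hne hadj hx6 hy6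
    have hle := Finset.card_le_card (Finset.subset_erase.2 ⟨hsub, hx_notMem⟩)
    rw [Finset.card_erase_of_mem hxt] at hle
    omega

theorem IsMinCounterexample.exists_mem_support_notMem_leaves [Finite V]
    (hG : IsMinCounterexample G) (hD : ∀ t, (D.bag t).card ≤ 7) :
    (G.support \ D.leaves).Nonempty := by
  obtain ⟨a, b, hab⟩ := hG.exists_adj
  obtain ⟨x, hx⟩ := D.exists_isSimplicialIn (U := G.support) ⟨a, b, hab⟩
  obtain ⟨u, hxu⟩ := hx.1
  exact ⟨u, ⟨x, hxu.symm⟩, fun hu =>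
    hxu.ne (hG.eq_of_shareBag hD hx hu (TreeDecomp.shareBag_of_adj hxu))⟩

variable [Fintype V] [DecidableRel G.Adj]

/-- Once `D.leaves` are removed, `w` is a leaf of what remains of the tree decomposition, and `Q`
is a bag showing this. At least one of the removed leaves shares a bag with `w`. -/
structure IsSecondLeaf (D : TreeDecomp G α) (w : V) (Q : Finset V) : Prop where
  mem : w ∈ Q
  card_le : Q.card ≤ 7
  mem_support : w ∈ G.support
  notMem_leaves : w ∉ D.leaves
  exists_leaf : ∃ x ∈ D.leaves, D.ShareBag x w
  neighborFinset_subset : ∀ x ∈ D.leaves, D.ShareBag x w → G.neighborFinset x ⊆ Q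
  mem_or_mem_leaves : ∀ u, G.Adj w u → u ∈ Q ∨ u ∈ D.leaves

theorem IsSecondLeaf.neighborFinset_subset_of_adj {Q : Finset V} (hQ : IsSecondLeaf D w Q)
    (hx : x ∈ D.leaves) (hxw : G.Adj x w) : G.neighborFinset x ⊆ Q :=
  hQ.neighborFinset_subset x hx (TreeDecomp.shareBag_of_adj hxw)

theorem IsMinCounterexample.exists_isSecondLeaf (hG : IsMinCounterexample G)
    (hD : ∀ t, (D.bag t).card ≤ 7) : ∃ w Q, IsSecondLeaf D w Q := by
  classical
  obtain ⟨w, ⟨hw, hwL⟩, t, hwt, ht⟩ :=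
    D.exists_isSimplicialIn (hG.exists_mem_support_notMem_leaves hD)
  refine ⟨w, (D.bag t).filter (· ∉ D.leaves), Finset.mem_filter.2 ⟨hwt, hwL⟩,
    (Finset.card_filter_le _ _).trans (hD t), hw, hwL, ?_, fun x hx hxw u hu => ?_, fun u hu => ?_⟩
  · by_contra! hno
    exact hwL ⟨hw, t, hwt, fun u hu huw => ht u ⟨hu, fun huL => hno u huL huw⟩ huw⟩
  · rw [mem_neighborFinset] at hu
    have huL : u ∉ D.leaves := fun huL =>
      hu.ne (hG.eq_of_shareBag hD hx huL (TreeDecomp.shareBag_of_adj hu))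
    obtain ⟨-, s, -, hs⟩ := hx
    have huw : D.ShareBag u w := ⟨s, TreeDecomp.mem_bag_of_adj hs hu, hs w hw hxw.symm⟩
    exact Finset.mem_filter.2 ⟨ht u ⟨⟨x, hu.symm⟩, huL⟩ huw, huL⟩
  · refine or_iff_not_imp_right.2 fun huL => Finset.mem_filter.2 ⟨?_, huL⟩
    exact ht u ⟨⟨w, hu.symm⟩, huL⟩ (TreeDecomp.shareBag_of_adj hu.symm)

namespace IsSecondLeaf

variable {Q : Finset V}

theorem exists_leaf_adj (hQ : IsSecondLeaf D w Q) (hG : IsMinCounterexample G)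
    (hD : ∀ t, (D.bag t).card ≤ 7) : ∃ x ∈ D.leaves, G.Adj x w := by
  classical
  by_contra! hno
  obtain ⟨x, hx, hxw⟩ := hQ.exists_leaf
  have hwQ : G.neighborFinset w ⊆ Q.erase w := fun u hu => by
    rw [mem_neighborFinset] at hu
    exact Finset.mem_erase.2
      ⟨hu.ne', (hQ.mem_or_mem_leaves u hu).resolve_right fun huL => hno u huL hu.symm⟩
  have hxQ : G.neighborFinset x ⊆ Q.erase w :=
    Finset.subset_erase.2 ⟨hQ.neighborFinset_subset x hx hxw, by simpa using hno x hx⟩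
  have hcard : (Q.erase w).card ≤ 6 := by
    have := hQ.card_le
    rw [Finset.card_erase_of_mem hQ.mem]
    omega
  have hw6 : G.degree w ≤ 6 :=
    (G.card_neighborFinset_eq_degree w).symm.trans_le ((Finset.card_le_card hwQ).trans hcard)
  have hne : x ≠ w := fun hxw => hQ.notMem_leaves (hxw ▸ hx)
  have hseven := hG.seven_le_card_union_of_not_adj hx.1 hQ.mem_support hne (hno x hx)
    (TreeDecomp.degree_le_of_mem_leaves hD hx) hw6
  have hsix := (Finset.card_le_card (Finset.union_subset hxQ hwQ)).trans hcard
  omega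

theorem degrees_of_leaves [DecidableEq V] (hQ : IsSecondLeaf D w Q) (hG : IsMinCounterexample G)
    (hD : ∀ t, (D.bag t).card ≤ 7) (hx : x ∈ D.leaves) (hy : y ∈ D.leaves) (hne : x ≠ y)
    (hxw : G.Adj x w) (hyw : G.Adj y w) :
    ¬ G.Adj x y ∧ G.degree x = 5 ∧ G.degree y = 5 ∧
      (G.neighborFinset x ∩ G.neighborFinset y).card = 3 := by
  have hxy : ¬ G.Adj x y := fun h =>
    hne (hG.eq_of_shareBag hD hx hy (TreeDecomp.shareBag_of_adj h))
  have hx6 := TreeDecomp.degree_le_of_mem_leaves hD hx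
  have hy6 := TreeDecomp.degree_le_of_mem_leaves hD hy
  have hsub := Finset.union_subset (hQ.neighborFinset_subset_of_adj hx hxw)
    (hQ.neighborFinset_subset_of_adj hy hyw)
  exact ⟨hxy, hG.degrees_of_not_adj hne hxy (hG.five_le_degree hx.1 hx6) hx6
    (hG.five_le_degree hy.1 hy6) hy6 ((Finset.card_le_card hsub).trans hQ.card_le)⟩

theorem exists_second_leaf_adj (hQ : IsSecondLeaf D w Q) (hG : IsMinCounterexample G)
    (hD : ∀ t, (D.bag t).card ≤ 7) (hx : x ∈ D.leaves) (hxw : G.Adj x w) :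
    ∃ y ∈ D.leaves, G.Adj y w ∧ x ≠ y := by
  classical
  by_contra! hno
  have hsub : G.neighborFinset x ∪ G.neighborFinset w ⊆ insert x Q := by
    refine Finset.union_subset
      ((hQ.neighborFinset_subset_of_adj hx hxw).trans (Finset.subset_insert x Q)) fun u hu => ?_
    rw [mem_neighborFinset] at hu
    obtain huQ | huL := hQ.mem_or_mem_leaves u hu
    · exact Finset.mem_insert_of_mem huQ
    · exact hno u huL hu.symm ▸ Finset.mem_insert_self x Q
  have hnine := hG.nine_le_card_union_of_adj hxw (TreeDecomp.degree_le_of_mem_leaves hD hx)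
  have hle := (Finset.card_le_card hsub).trans (Finset.card_insert_le x Q)
  have hseven := hQ.card_le
  omega

theorem exists_third_leaf_adj (hQ : IsSecondLeaf D w Q) (hG : IsMinCounterexample G)
    (hD : ∀ t, (D.bag t).card ≤ 7) (hx : x ∈ D.leaves) (hy : y ∈ D.leaves) (hne : x ≠ y)
    (hxw : G.Adj x w) (hyw : G.Adj y w) : ∃ z ∈ D.leaves, G.Adj z w ∧ x ≠ z ∧ y ≠ z := by
  classical
  obtain ⟨hxy, hx5, hy5, hcap⟩ := hQ.degrees_of_leaves hG hD hx hy hne hxw hyw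
  obtain ⟨z, hwz, hzx, hzy, hxz, hyz⟩ :=
    hG.exists_adj_of_card_inter_eq_three hne hxy hxw hyw hx5 hy5 hcap
  have hunion := Finset.card_union_add_card_inter (G.neighborFinset x) (G.neighborFinset y)
  simp only [card_neighborFinset_eq_degree] at hunion
  have hQ_eq : G.neighborFinset x ∪ G.neighborFinset y = Q :=
    Finset.eq_of_subset_of_card_le (Finset.union_subset (hQ.neighborFinset_subset_of_adj hx hxw)
      (hQ.neighborFinset_subset_of_adj hy hyw)) (by have := hQ.card_le; omega)
  have hzQ : z ∉ Q := by
    rw [← hQ_eq, Finset.mem_union, mem_neighborFinset, mem_neighborFinset]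
    exact not_or.2 ⟨hxz, hyz⟩
  exact ⟨z, (hQ.mem_or_mem_leaves z hwz).resolve_left hzQ, hwz.symm, hzx.symm, hzy.symm⟩

end IsSecondLeaf

end Leaves

section Main

variable [Finite V] {G : SimpleGraph V}

theorem IsMinCounterexample.false_of_treeDecomp (hG : IsMinCounterexample G)
    {α : Type} (D : TreeDecomp G α) (hD : ∀ t, (D.bag t).card ≤ 7) : False := by
  classical
  have := Fintype.ofFinite V
  obtain ⟨w, Q, hQ⟩ := hG.exists_isSecondLeaf hD
  obtain ⟨x, hx, hxw⟩ := hQ.exists_leaf_adj hG hD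
  obtain ⟨y, hy, hyw, hxy⟩ := hQ.exists_second_leaf_adj hG hD hx hxw
  obtain ⟨z, hz, hzw, hxz, hyz⟩ := hQ.exists_third_leaf_adj hG hD hx hy hxy hxw hyw
  obtain ⟨hxy_adj, hx5, hy5, hcap_xy⟩ := hQ.degrees_of_leaves hG hD hx hy hxy hxw hyw
  obtain ⟨hxz_adj, -, hz5, hcap_xz⟩ := hQ.degrees_of_leaves hG hD hx hz hxz hxw hzw
  obtain ⟨hyz_adj, -, -, hcap_yz⟩ := hQ.degrees_of_leaves hG hD hy hz hyz hyw hzw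
  have hsub := Finset.union_subset (Finset.union_subset (hQ.neighborFinset_subset_of_adj hx hxw)
    (hQ.neighborFinset_subset_of_adj hy hyw)) (hQ.neighborFinset_subset_of_adj hz hzw)
  have h_eight := hG.eight_le_card_union_of_card_inter_eq_three hxy hxz hyz hxy_adj hxz_adj hyz_adj
    hxw hyw hzw hx5 hy5 hz5 hcap_xy hcap_xz hcap_yz
  have hle := (Finset.card_le_card hsub).trans hQ.card_le
  omega

theorem hasBound_of_treeDecomp {α : Type} (D : TreeDecomp G α)
    (hD : ∀ t, (D.bag t).card ≤ 7) : HasBound G := by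
  induction G using WellFoundedLT.induction with
  | _ G ih =>
    by_contra hG
    exact IsMinCounterexample.false_of_treeDecomp
      ⟨hG, fun G' hlt => ih G' hlt (D.ofLE hlt.le) hD⟩ D hD

theorem HasBound.tau_le (hG : HasBound G) : tau G ≤ 2 * nu G := by
  have := Fintype.ofFinite V
  obtain ⟨X, Y, hX, hY, hXY⟩ := hG
  have htau : tau G ≤ X.card := Nat.sInf_le ⟨X, hX, rfl⟩
  have hbdd : BddAbove {n | ∃ Z, IsTrianglePacking G Z ∧ Z.card = n} :=
    ⟨Fintype.card (Finset V), by rintro _ ⟨Z, -, rfl⟩; exact Z.card_le_univ⟩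
  have hnu : Y.card ≤ nu G := le_csSup hbdd ⟨Y, hY, rfl⟩
  omega

theorem hasDecompOfWidthLE_card (G : SimpleGraph V) : HasDecompOfWidthLE G (Nat.card V) := by
  have := Fintype.ofFinite V
  refine ⟨Unit, ⟨⊥, IsTree.of_subsingleton, fun _ => Finset.univ, by simp, by simp,
    fun v => ?_⟩, fun _ => by simp⟩
  have : Nonempty {_t : Unit | v ∈ (Finset.univ : Finset V)} := ⟨⟨(), Finset.mem_univ v⟩⟩
  exact Connected.of_subsingleton

theorem hasDecompOfWidthLE_of_treewidth_le {k : ℕ} (h : treewidth G ≤ k) :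
    HasDecompOfWidthLE G k := by
  obtain ⟨α, D, hD⟩ := Nat.sInf_mem (s := {k | HasDecompOfWidthLE G k})
    ⟨_, hasDecompOfWidthLE_card G⟩
  exact ⟨α, D, fun t => (hD t).trans (Nat.succ_le_succ h)⟩

end Main

end Tuza

/-- Tuza's conjecture holds for graphs of treewidth at most `6`. -/
theorem tuza_of_treewidth_le_six (V : Type) [Fintype V] (G : SimpleGraph V)
    (htw : treewidth G ≤ 6) : tau G ≤ 2 * nu G := by
  obtain ⟨α, D, hD⟩ := Tuza.hasDecompOfWidthLE_of_treewidth_le htw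
  exact (Tuza.hasBound_of_treeDecomp D hD).tau_le
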